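/- Fix N ≥ 1, k ≥ 2, and a k-tuple (m₁,…,m_k) of units modulo N. Let τ_{k,m}(x) be the number of n ≤ x with exactly k prime factors counted with multiplicity, written n = p₁p₂⋯p_k with p₁ ≤ p₂ ≤ … ≤ p_k, such that p_i ≡ m_i (mod N) for each i. Then τ_{k,m}(x) ~ (1/φ(N)^k) · x (log log x)^{k-1} / ((k-1)! log x) as x → ∞. -/

import Mathlib

open Filter Asymptotics
open scoped Classical


section WI
open MeasureTheory Complex Topology

theorem wi_fubini (b : ℝ → ℝ) (hb : Measurable b) (M : ℝ) (hM : ∀ v, 0 < v → |b v| ≤ M)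
    (φ K : ℝ → ℝ) (hφ : Continuous φ) (hφs : HasCompactSupport φ)
    (hK : ∀ v : ℝ, (K v : ℂ) = ∫ t : ℝ, (φ t : ℂ) * cexp (-(I * t * v)))
    (ε : ℝ) (hε : 0 < ε) (y : ℝ) :
    ∫ t : ℝ, (φ t : ℂ) * cexp (I * t * y) *
      (∫ v in Set.Ioi (0:ℝ), (b v : ℂ) * cexp (-((ε + I * t) * v))) =
    ∫ v in Set.Ioi (0:ℝ), (b v : ℂ) * (Real.exp (-(ε * v)) * K (v - y) : ℝ) := by
  have hφi : Integrable (fun t => (φ t : ℂ)) :=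
    (hφ.integrable_of_hasCompactSupport hφs).ofReal
  have hexp : IntegrableOn (fun v => Real.exp (-(ε * v))) (Set.Ioi 0) := by
    simpa [neg_mul] using integrableOn_exp_mul_Ioi (a := -ε) (by linarith) 0
  have hbi : Integrable (fun v => (b v : ℂ) * (Real.exp (-(ε * v)) : ℝ))
      (volume.restrict (Set.Ioi 0)) := by
    refine Integrable.mono' (hexp.const_mul M) ?_ ?_
    · exact (by fun_prop : Measurable fun v => (b v : ℂ) * (Real.exp (-(ε * v)) : ℝ)).aestronglyMeasurable
    · filter_upwards [ae_restrict_mem measurableSet_Ioi] with v hv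
      rw [norm_mul, norm_real, norm_real, Real.norm_eq_abs, Real.norm_eq_abs, Real.abs_exp]
      exact mul_le_mul_of_nonneg_right (hM v hv) (Real.exp_pos _).le
  have hprod := hφi.mul_prod hbi
  have hF : Integrable (fun z : ℝ × ℝ => (φ z.1 : ℂ) * cexp (I * z.1 * y) *
      ((b z.2 : ℂ) * cexp (-((ε + I * z.1) * z.2)))) (volume.prod (volume.restrict (Set.Ioi 0))) := by
    refine hprod.mono ?_ ?_
    · exact (by fun_prop : Measurable fun z : ℝ × ℝ => (φ z.1 : ℂ) * cexp (I * z.1 * y) *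
        ((b z.2 : ℂ) * cexp (-((ε + I * z.1) * z.2)))).aestronglyMeasurable
    · refine Eventually.of_forall fun z => le_of_eq ?_
      simp only [norm_mul, norm_exp, norm_real]
      simp
  simp_rw [← integral_const_mul]
  rw [integral_integral_swap hF]
  refine integral_congr_ae (Eventually.of_forall fun v => ?_)
  simp only
  push_cast
  have := hK (v - y)
  push_cast at this
  rw [this, ← mul_assoc, ← integral_const_mul]
  congr 1; ext t
  rw [show cexp (-((ε + I * t) * v)) = cexp (-(ε * v)) * cexp (-(I * t * v)) by
    rw [← Complex.exp_add]; ring_nf]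
  rw [show cexp (-(I * t * (v - y))) = cexp (I * t * y) * cexp (-(I * t * v)) by
    rw [← Complex.exp_add]; ring_nf]
  ring

theorem wi_core (b : ℝ → ℝ) (hb : Measurable b) (M : ℝ) (hM : ∀ v, 0 < v → |b v| ≤ M)
    (φ K : ℝ → ℝ) (hφ : Continuous φ) (hφs : HasCompactSupport φ)
    (hK : ∀ v : ℝ, (K v : ℂ) = ∫ t : ℝ, (φ t : ℂ) * cexp (-(I * t * v)))
    (hKi : Integrable K) (g : ℂ → ℂ) (hg : ContinuousOn g {s | 0 ≤ s.re})
    (hgb : ∀ s : ℂ, 0 < s.re → g s = ∫ v in Set.Ioi (0:ℝ), (b v : ℂ) * cexp (-(s * v))) :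
    Tendsto (fun y : ℝ => ∫ v in Set.Ioi (0:ℝ), b v * K (v - y)) atTop (𝓝 0) := by
  have hcont0 : Continuous fun t : ℝ => g (I * t) := by
    refine hg.comp_continuous (by fun_prop) (fun t => by simp)
  have key : ∀ y : ℝ, ∫ t : ℝ, (φ t : ℂ) * cexp (I * t * y) * g (I * t) =
      ∫ v in Set.Ioi (0:ℝ), (b v : ℂ) * (K (v - y) : ℝ) := by
    intro y
    have l1 : Tendsto (fun ε : ℝ => ∫ t : ℝ, (φ t : ℂ) * cexp (I * t * y) * g (ε + I * t)) (𝓝[>] 0)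
        (𝓝 (∫ t : ℝ, (φ t : ℂ) * cexp (I * t * y) * g (I * t))) := by
      have hcomp : IsCompact ((Set.Icc (0:ℝ) 1) ×ˢ (tsupport φ)) := isCompact_Icc.prod hφs
      have hc2 : ContinuousOn (fun z : ℝ × ℝ => g (z.1 + I * z.2)) ((Set.Icc (0:ℝ) 1) ×ˢ (tsupport φ)) := by
        refine hg.comp (by fun_prop) ?_
        rintro ⟨e, t⟩ ⟨he, _⟩
        simpa using he.1
      obtain ⟨C, hC⟩ := hcomp.exists_bound_of_continuousOn hc2
      refine tendsto_integral_filter_of_dominated_convergence (fun t => C * |φ t|) ?_ ?_ ?_ ?_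
      · filter_upwards [self_mem_nhdsWithin] with ε hε
        have : Continuous fun t : ℝ => g (ε + I * t) :=
          hg.comp_continuous (by fun_prop) (fun t => by simpa using (le_of_lt hε))
        have h2 : Continuous fun t : ℝ => (φ t : ℂ) * cexp (I * t * y) := by fun_prop
        exact (h2.mul this).aestronglyMeasurable
      · filter_upwards [Ioc_mem_nhdsGT (zero_lt_one)] with ε hε
        refine Eventually.of_forall fun t => ?_
        by_cases ht : t ∈ tsupport φ
        · have := hC (ε, t) ⟨⟨hε.1.le, hε.2⟩, ht⟩
          simp only [norm_mul, norm_exp, norm_real, Real.norm_eq_abs]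
          simp
          rw [mul_comm]
          exact mul_le_mul_of_nonneg_right this (abs_nonneg _)
        · simp [image_eq_zero_of_notMem_tsupport ht]
      · exact ((hφ.integrable_of_hasCompactSupport hφs).abs.const_mul C)
      · refine Eventually.of_forall fun t => ?_
        refine Tendsto.mul tendsto_const_nhds ?_
        have h1 : ContinuousWithinAt g {s | 0 ≤ s.re} (I * t) := hg _ (by simp)
        refine h1.tendsto.comp ?_
        refine tendsto_nhdsWithin_iff.2 ⟨?_, ?_⟩
        · have : Continuous fun ε : ℝ => (ε : ℂ) + I * t := by fun_prop
          have := (this.tendsto 0).mono_left (nhdsWithin_le_nhds (s := Set.Ioi 0))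
          simpa using this
        · filter_upwards [self_mem_nhdsWithin] with ε hε
          simpa using le_of_lt hε
    have hKy : Integrable (fun v => K (v - y)) := hKi.comp_sub_right y
    have l2 : Tendsto (fun ε : ℝ => ∫ v in Set.Ioi (0:ℝ), (b v : ℂ) * (Real.exp (-(ε * v)) * K (v - y) : ℝ)) (𝓝[>] 0)
        (𝓝 (∫ v in Set.Ioi (0:ℝ), (b v : ℂ) * (K (v - y) : ℝ))) := by
      refine tendsto_integral_filter_of_dominated_convergence (fun v => M * |K (v - y)|) ?_ ?_ ?_ ?_
      · refine Eventually.of_forall fun ε => ?_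
        refine AEStronglyMeasurable.mul (by fun_prop) ?_
        refine (Complex.continuous_ofReal.comp_aestronglyMeasurable ?_)
        exact AEStronglyMeasurable.mul (by fun_prop) hKy.aestronglyMeasurable.restrict
      · filter_upwards [self_mem_nhdsWithin] with ε hε
        filter_upwards [ae_restrict_mem measurableSet_Ioi] with v hv
        rw [norm_mul, norm_real, norm_real, Real.norm_eq_abs, Real.norm_eq_abs, abs_mul, Real.abs_exp]
        have h1 : Real.exp (-(ε * v)) ≤ 1 := Real.exp_le_one_iff.2 (by have := mul_pos (Set.mem_Ioi.1 hε) (Set.mem_Ioi.1 hv); linarith)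
        have := hM v hv
        have h2 : Real.exp (-(ε * v)) * |K (v - y)| ≤ |K (v - y)| :=
          mul_le_of_le_one_left (abs_nonneg _) h1
        exact mul_le_mul this h2 (by positivity) (le_trans (abs_nonneg _) this)
      · exact (hKy.abs.const_mul M).restrict
      · refine Eventually.of_forall fun v => ?_
        refine Tendsto.mul tendsto_const_nhds ?_
        have : Continuous fun ε : ℝ => ((Real.exp (-(ε * v)) * K (v - y) : ℝ) : ℂ) := by fun_prop
        have := (this.tendsto 0).mono_left (nhdsWithin_le_nhds (s := Set.Ioi 0))
        simpa using this
    refine tendsto_nhds_unique_of_eventuallyEq l1 l2 ?_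
    filter_upwards [self_mem_nhdsWithin] with ε hε
    rw [← wi_fubini b hb M hM φ K hφ hφs hK ε hε y]
    congr 1; ext t
    rw [hgb _ (by simpa using hε)]
  have RL := Real.tendsto_integral_exp_smul_cocompact (fun t : ℝ => (φ t : ℂ) * g (I * t))
  have l3 : Tendsto (fun y : ℝ => -(y / (2 * Real.pi))) atTop (cocompact ℝ) := by
    refine Tendsto.mono_right ?_ atBot_le_cocompact
    exact tendsto_neg_atTop_atBot.comp (tendsto_id.atTop_div_const (by positivity))
  have l4 := RL.comp l3
  have l5 : Tendsto (fun y : ℝ => ∫ v in Set.Ioi (0:ℝ), (b v : ℂ) * (K (v - y) : ℝ)) atTop (𝓝 0) := by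
    refine l4.congr fun y => ?_
    rw [← key y]
    simp only [Function.comp]
    congr 1; ext t
    rw [Circle.smul_def, Real.fourierChar_apply, smul_eq_mul]
    rw [show ((2 * Real.pi * -(t * -(y / (2 * Real.pi))) : ℝ) : ℂ) * I = I * t * y by
      push_cast
      have : (Real.pi : ℂ) ≠ 0 := by exact_mod_cast Real.pi_ne_zero
      field_simp]
    ring
  have l6 := (Complex.continuous_re.tendsto _).comp l5
  simp only [Complex.zero_re] at l6
  refine l6.congr fun y => ?_
  simp only [Function.comp]
  rw [show (∫ v in Set.Ioi (0:ℝ), (b v : ℂ) * (K (v - y) : ℝ)) = ((∫ v in Set.Ioi (0:ℝ), b v * K (v - y) : ℝ) : ℂ) by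
    rw [← integral_complex_ofReal]; push_cast; rfl]
  simp
end WI


section WI
open MeasureTheory Complex Topology

/-- Fejer kernel -/
noncomputable def fejK (v : ℝ) : ℝ := if v = 0 then 1 else 2 * (1 - Real.cos v) / v ^ 2

/-- tent function -/
noncomputable def tent (t : ℝ) : ℝ := max 0 (1 - |t|)

theorem tent_cont : Continuous tent := by unfold tent; fun_prop

theorem tent_supp : HasCompactSupport tent := by
  refine HasCompactSupport.intro (K := Set.Icc (-1) 1) isCompact_Icc fun x hx => ?_
  unfold tent
  rw [Set.mem_Icc, ← abs_le] at hx
  exact max_eq_left (by linarith)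

theorem tent_even (t : ℝ) : tent (-t) = tent t := by simp [tent]

theorem tent_half (f : ℝ → ℝ) :
    ∫ t in Set.Ioi (0:ℝ), tent t * f t = ∫ t in (0:ℝ)..1, (1 - t) * f t := by
  rw [intervalIntegral.integral_of_le zero_le_one]
  rw [← integral_indicator measurableSet_Ioi, ← integral_indicator measurableSet_Ioc]
  congr 1; ext t
  by_cases h0 : 0 < t
  · by_cases h1 : t ≤ 1
    · rw [Set.indicator_of_mem (show t ∈ Set.Ioi 0 from h0), Set.indicator_of_mem (show t ∈ Set.Ioc 0 1 from ⟨h0, h1⟩)]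
      rw [tent, abs_of_pos h0, max_eq_right (by linarith)]
    · rw [Set.indicator_of_mem (show t ∈ Set.Ioi 0 from h0), Set.indicator_of_notMem (show t ∉ Set.Ioc 0 1 from fun h => h1 h.2)]
      rw [tent, abs_of_pos h0, max_eq_left (by linarith), zero_mul]
  · rw [Set.indicator_of_notMem (show t ∉ Set.Ioi 0 from h0), Set.indicator_of_notMem (show t ∉ Set.Ioc 0 1 from fun h => h0 h.1)]

theorem tent_cos (v : ℝ) : ∫ t in (0:ℝ)..1, (1 - t) * Real.cos (t * v) = fejK v / 2 := by
  unfold fejK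
  split_ifs with hv
  · subst hv
    simp only [mul_zero, Real.cos_zero, mul_one, if_true]
    rw [intervalIntegral.integral_sub (by simp) (by simp)]
    simp
    norm_num
  · have : ∀ t ∈ Set.uIcc (0:ℝ) 1, HasDerivAt (fun t => (1 - t) * Real.sin (t * v) / v - Real.cos (t * v) / v ^ 2)
        ((1 - t) * Real.cos (t * v)) t := by
      intro t _
      have h1 : HasDerivAt (fun t : ℝ => t * v) v t := by simpa using (hasDerivAt_id t).mul_const v
      have h2 := h1.sin
      have h3 := h1.cos
      have h4 : HasDerivAt (fun t : ℝ => 1 - t) (-1) t := by simpa using (hasDerivAt_id t).const_sub 1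
      have h5 := ((h4.mul h2).div_const v).sub (h3.div_const (v^2))
      refine h5.congr_deriv ?_
      field_simp
      ring
    rw [intervalIntegral.integral_eq_sub_of_hasDerivAt this
      ((by fun_prop : Continuous fun t => (1 - t) * Real.cos (t * v)).intervalIntegrable _ _)]
    simp
    field_simp
    ring

theorem fejK_fourier (v : ℝ) : (fejK v : ℂ) = ∫ t : ℝ, (tent t : ℂ) * cexp (-(I * t * v)) := by
  have hIntg : Integrable (fun t : ℝ => (tent t : ℂ) * cexp (-(I * t * v))) := by
    refine Continuous.integrable_of_hasCompactSupport ?_ ?_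
    · have := tent_cont
      fun_prop
    · exact (tent_supp.comp_left (g := fun x : ℝ => (x : ℂ)) (by simp)).mul_right
  have hsplit : ∫ t : ℝ, (tent t : ℂ) * cexp (-(I * t * v)) =
      ∫ t in Set.Ioi (0:ℝ), ((tent t : ℂ) * cexp (-(I * t * v)) + (tent t : ℂ) * cexp (I * t * v)) := by
    have h1 := intervalIntegral.integral_Iic_add_Ioi (b := (0:ℝ)) hIntg.integrableOn hIntg.integrableOn
    rw [← h1, add_comm, integral_add hIntg.integrableOn]
    · congr 1
      have := integral_comp_neg_Ioi (0:ℝ) (fun t : ℝ => (tent t : ℂ) * cexp (-(I * t * v)))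
      simp only [neg_zero] at this
      rw [← this]
      congr 1; ext t
      rw [tent_even]; push_cast; ring_nf
    · have := (hIntg.comp_neg).integrableOn (s := Set.Ioi 0)
      refine this.congr_fun (fun t _ => ?_) measurableSet_Ioi
      simp only [tent_even]; push_cast; ring_nf
  rw [hsplit]
  have : ∀ t : ℝ, (tent t : ℂ) * cexp (-(I * t * v)) + (tent t : ℂ) * cexp (I * t * v) =
      ((2 * (tent t * Real.cos (t * v)) : ℝ) : ℂ) := by
    intro t
    push_cast
    rw [Complex.cos]
    ring_nf
  simp_rw [this]
  rw [integral_complex_ofReal, integral_const_mul, tent_half (fun t => Real.cos (t * v)), tent_cos]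
  congr 1; ring

theorem fejK_nonneg (v : ℝ) : 0 ≤ fejK v := by
  unfold fejK
  split_ifs
  · norm_num
  · have := Real.cos_le_one v
    have : 0 ≤ 1 - Real.cos v := by linarith
    positivity

theorem fejK_le_one (v : ℝ) : fejK v ≤ 1 := by
  unfold fejK
  split_ifs with h
  · norm_num
  · rw [div_le_one (by positivity)]
    have := Real.one_sub_sq_div_two_le_cos (x := v)
    linarith

theorem fejK_le (v : ℝ) (hv : v ≠ 0) : fejK v ≤ 4 / v ^ 2 := by
  unfold fejK
  rw [if_neg hv]
  have := Real.neg_one_le_cos v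
  gcongr
  linarith

theorem fejK_cont : Continuous fejK := by
  have : fejK = fun v => 2 * ∫ t in (0:ℝ)..1, (1 - t) * Real.cos (t * v) := by
    ext v; rw [tent_cos]; ring
  rw [this]
  refine continuous_const.mul ?_
  exact intervalIntegral.continuous_parametric_intervalIntegral_of_continuous' (by fun_prop) _ _

theorem fejK_int : Integrable fejK := by
  refine Integrable.mono' (integrable_inv_one_add_sq.const_mul 5) fejK_cont.aestronglyMeasurable ?_
  refine Eventually.of_forall fun v => ?_
  rw [Real.norm_eq_abs, abs_of_nonneg (fejK_nonneg v), ← div_eq_mul_inv, le_div_iff₀ (by positivity)]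
  have h1 := fejK_le_one v
  by_cases hv : v = 0
  · subst hv; simp; linarith
  · have h2 := fejK_le v hv
    rw [le_div_iff₀ (by positivity)] at h2
    nlinarith

theorem fejK_pos : 0 < ∫ v, fejK v := by
  exact integral_pos_of_integrable_nonneg_nonzero fejK_cont fejK_int fejK_nonneg
    (x := 0) (by simp [fejK])
end WI


section WI
open MeasureTheory Complex Topology

noncomputable def fejL (l v : ℝ) : ℝ := l * fejK (l * v)

theorem fejL_fourier (l : ℝ) (hl : 0 < l) (v : ℝ) :
    (fejL l v : ℂ) = ∫ t : ℝ, (tent (t / l) : ℂ) * cexp (-(I * t * v)) := by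
  have h := Measure.integral_comp_div (fun u : ℝ => (tent u : ℂ) * cexp (-(I * u * ((l * v : ℝ) : ℂ)))) l
  rw [← fejK_fourier, abs_of_pos hl] at h
  unfold fejL
  rw [ofReal_mul, ← smul_eq_mul, ← Complex.coe_smul] at *
  rw [← h]
  congr 1; ext t
  have : (l : ℂ) ≠ 0 := by exact_mod_cast hl.ne'
  push_cast
  congr 2
  field_simp
  rw [smul_eq_mul]; ring

theorem fejL_int (l : ℝ) (hl : 0 < l) : Integrable (fejL l) :=
  (fejK_int.comp_mul_left' hl.ne').const_mul l

theorem fejL_integral (l : ℝ) (hl : 0 < l) : ∫ v, fejL l v = ∫ v, fejK v := by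
  unfold fejL
  rw [integral_const_mul, Measure.integral_comp_mul_left, abs_of_pos (inv_pos.2 hl), smul_eq_mul]
  field_simp

theorem fejL_nonneg (l : ℝ) (hl : 0 < l) (v : ℝ) : 0 ≤ fejL l v :=
  mul_nonneg hl.le (fejK_nonneg _)

theorem fejL_interval (l d : ℝ) (hl : 0 < l) :
    ∫ v in (-d)..d, fejL l v = ∫ v in (-(l * d))..(l * d), fejK v := by
  unfold fejL
  rw [intervalIntegral.integral_const_mul, intervalIntegral.mul_integral_comp_mul_left]
  simp

theorem wi_ineq (B : ℝ → ℝ) (hBm : Measurable B) (hB0 : ∀ v, 0 ≤ B v)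
    (M A : ℝ) (hA : 0 < A) (hBM : ∀ v, 0 < v → B v ≤ M)
    (hmono : ∀ u v, u ≤ v → B u * Real.exp (u - v) ≤ B v)
    (l d : ℝ) (hl : 0 < l) (hd : 0 < d) (y : ℝ) (hy : d < y) :
    B (y - d) * Real.exp (-(2 * d)) * (∫ v in (-(l * d))..(l * d), fejK v) ≤
      (∫ v in Set.Ioi (0:ℝ), (B v - A) * fejL l (v - y)) + A * ∫ v, fejK v ∧
    (∫ v in Set.Ioi (0:ℝ), (B v - A) * fejL l (v - y)) + A * (∫ v in (-(l * d))..(l * d), fejK v)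
      ≤ B (y + d) * Real.exp (2 * d) * (∫ v, fejK v) +
        M * ((∫ v, fejK v) - (∫ v in (-(l * d))..(l * d), fejK v)) := by
  set κ := ∫ v, fejK v
  rw [← fejL_interval l d hl]
  set κ' := ∫ v in (-d)..d, fejL l v with hκ'
  have hKi : Integrable (fun v => fejL l (v - y)) := (fejL_int l hl).comp_sub_right y
  have hK0 : ∀ v, 0 ≤ fejL l (v - y) := fun v => fejL_nonneg l hl _
  have hKtot : ∫ v, fejL l (v - y) = κ := by
    rw [integral_sub_right_eq_self (fejL l) y, fejL_integral l hl]
  have hBK : IntegrableOn (fun v => B v * fejL l (v - y)) (Set.Ioi 0) := by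
    refine Integrable.mono' (hKi.integrableOn.const_mul M) ?_ ?_
    · exact AEStronglyMeasurable.mul hBm.aestronglyMeasurable hKi.aestronglyMeasurable.restrict
    · filter_upwards [ae_restrict_mem measurableSet_Ioi] with v hv
      rw [Real.norm_eq_abs, abs_of_nonneg (mul_nonneg (hB0 v) (hK0 v))]
      exact mul_le_mul_of_nonneg_right (hBM v hv) (hK0 v)
  have hsplit : (∫ v in Set.Ioi (0:ℝ), (B v - A) * fejL l (v - y)) =
      (∫ v in Set.Ioi (0:ℝ), B v * fejL l (v - y)) - A * ∫ v in Set.Ioi (0:ℝ), fejL l (v - y) := by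
    rw [← integral_const_mul, ← integral_sub hBK (hKi.integrableOn.const_mul A)]
    congr 1; ext v; ring
  rw [hsplit]
  set J : Set ℝ := Set.Ioc (y - d) (y + d) with hJ
  have hJm : MeasurableSet J := measurableSet_Ioc
  have hJs : J ⊆ Set.Ioi 0 := fun v hv => by
    have := hv.1; simp only [Set.mem_Ioi]; linarith
  have hKJ : ∫ v in J, fejL l (v - y) = κ' := by
    rw [hJ, ← intervalIntegral.integral_of_le (by linarith), hκ',
      intervalIntegral.integral_comp_sub_right (fun v => fejL l v)]
    congr 1 <;> ring
  have hle1 : κ' ≤ ∫ v in Set.Ioi (0:ℝ), fejL l (v - y) := by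
    rw [← hKJ]
    exact setIntegral_mono_set hKi.integrableOn (Eventually.of_forall hK0) hJs.eventuallyLE
  have hle2 : ∫ v in Set.Ioi (0:ℝ), fejL l (v - y) ≤ κ := by
    rw [← hKtot]
    exact setIntegral_le_integral hKi (Eventually.of_forall hK0)
  constructor
  · have h1 : B (y - d) * Real.exp (-(2 * d)) * κ' ≤ ∫ v in Set.Ioi (0:ℝ), B v * fejL l (v - y) := by
      calc B (y - d) * Real.exp (-(2 * d)) * κ' = ∫ v in J, B (y - d) * Real.exp (-(2 * d)) * fejL l (v - y) := by
            rw [integral_const_mul, hKJ]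
        _ ≤ ∫ v in J, B v * fejL l (v - y) := by
            refine setIntegral_mono_on (hKi.integrableOn.const_mul _) (hBK.mono_set hJs) hJm ?_
            intro v hv
            refine mul_le_mul_of_nonneg_right ?_ (hK0 v)
            refine le_trans ?_ (hmono (y - d) v hv.1.le)
            refine mul_le_mul_of_nonneg_left (Real.exp_le_exp.2 ?_) (hB0 _)
            have := hv.2; linarith
        _ ≤ _ := by
            refine setIntegral_mono_set hBK ?_ hJs.eventuallyLE
            exact Eventually.of_forall fun v => mul_nonneg (hB0 v) (hK0 v)
    have := mul_le_mul_of_nonneg_left hle2 hA.le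
    linarith
  · have h2 : ∫ v in Set.Ioi (0:ℝ), B v * fejL l (v - y) ≤ B (y + d) * Real.exp (2 * d) * κ + M * (κ - κ') := by
      have hdec : ∫ v in Set.Ioi (0:ℝ), B v * fejL l (v - y) =
          (∫ v in J, B v * fejL l (v - y)) + ∫ v in Set.Ioi (0:ℝ) \ J, B v * fejL l (v - y) := by
        rw [setIntegral_sdiff hJm hBK hJs]; ring
      have hdecK : ∫ v in Set.Ioi (0:ℝ), fejL l (v - y) =
          (∫ v in J, fejL l (v - y)) + ∫ v in Set.Ioi (0:ℝ) \ J, fejL l (v - y) := by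
        rw [setIntegral_sdiff hJm hKi.integrableOn hJs]; ring
      have hκκ : κ' ≤ κ := hle1.trans hle2
      have hM0 : 0 ≤ M := (hB0 1).trans (hBM 1 one_pos)
      have e1 : ∫ v in J, B v * fejL l (v - y) ≤ B (y + d) * Real.exp (2 * d) * κ := by
        calc ∫ v in J, B v * fejL l (v - y) ≤ ∫ v in J, B (y + d) * Real.exp (2 * d) * fejL l (v - y) := by
              refine setIntegral_mono_on (hBK.mono_set hJs) (hKi.integrableOn.const_mul _) hJm ?_
              intro v hv
              refine mul_le_mul_of_nonneg_right ?_ (hK0 v)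
              have h3 := hmono v (y + d) hv.2
              have h4 : B v = B v * Real.exp (v - (y + d)) * Real.exp ((y + d) - v) := by
                rw [mul_assoc, ← Real.exp_add]; simp
              rw [h4]
              refine mul_le_mul h3 (Real.exp_le_exp.2 ?_) (Real.exp_pos _).le (hB0 _)
              have := hv.1; linarith
          _ = B (y + d) * Real.exp (2 * d) * κ' := by rw [integral_const_mul, hKJ]
          _ ≤ _ := mul_le_mul_of_nonneg_left hκκ (mul_nonneg (hB0 _) (Real.exp_pos _).le)
      have e2 : ∫ v in Set.Ioi (0:ℝ) \ J, B v * fejL l (v - y) ≤ M * (κ - κ') := by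
        calc ∫ v in Set.Ioi (0:ℝ) \ J, B v * fejL l (v - y) ≤ ∫ v in Set.Ioi (0:ℝ) \ J, M * fejL l (v - y) := by
              refine setIntegral_mono_on (hBK.mono_set Set.sdiff_subset) (hKi.integrableOn.const_mul _)
                (measurableSet_Ioi.diff hJm) ?_
              intro v hv
              exact mul_le_mul_of_nonneg_right (hBM v hv.1) (hK0 v)
          _ = M * ((∫ v in Set.Ioi (0:ℝ), fejL l (v - y)) - κ') := by
              rw [integral_const_mul, hdecK, hKJ]; ring
          _ ≤ _ := mul_le_mul_of_nonneg_left (by linarith) hM0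
      linarith
    have := mul_le_mul_of_nonneg_left hle1 hA.le
    linarith

theorem wi_tauber (B : ℝ → ℝ) (hBm : Measurable B) (hB0 : ∀ v, 0 ≤ B v)
    (M A : ℝ) (hA : 0 < A) (hBM : ∀ v, 0 < v → B v ≤ M)
    (hmono : ∀ u v, u ≤ v → B u * Real.exp (u - v) ≤ B v)
    (g : ℂ → ℂ) (hg : ContinuousOn g {s | 0 ≤ s.re})
    (hgb : ∀ s : ℂ, 0 < s.re → g s = ∫ v in Set.Ioi (0:ℝ), ((B v - A : ℝ) : ℂ) * cexp (-(s * v))) :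
    Tendsto B atTop (𝓝 A) := by
  have hP : ∀ l : ℝ, 0 < l → Tendsto (fun y : ℝ => ∫ v in Set.Ioi (0:ℝ), (B v - A) * fejL l (v - y)) atTop (𝓝 0) := by
    intro l hl
    refine wi_core (fun v => B v - A) (by fun_prop) (M + A) ?_ (fun t => tent (t / l)) (fejL l)
      ?_ ?_ (fejL_fourier l hl) (fejL_int l hl) g hg hgb
    · intro v hv
      rw [abs_le]
      have := hB0 v; have := hBM v hv
      constructor <;> linarith
    · exact tent_cont.comp (by fun_prop)
    · refine HasCompactSupport.intro (K := Set.Icc (-l) l) isCompact_Icc fun x hx => ?_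
      unfold tent
      rw [Set.mem_Icc, ← abs_le, not_le] at hx
      refine max_eq_left ?_
      rw [abs_div, abs_of_pos hl, sub_nonpos, le_div_iff₀ hl]
      linarith
  have hκ := fejK_pos
  set κ := ∫ v, fejK v with hκd
  have hR : Tendsto (fun R : ℝ => ∫ v in (-R)..R, fejK v) atTop (𝓝 κ) :=
    intervalIntegral_tendsto_integral fejK_int tendsto_neg_atTop_atBot tendsto_id
  have hexp : Tendsto (fun d : ℝ => Real.exp (2 * d)) (𝓝[>] 0) (𝓝 1) := by
    have : Continuous fun d : ℝ => Real.exp (2 * d) := by fun_prop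
    have := (this.tendsto 0).mono_left (nhdsWithin_le_nhds (s := Set.Ioi 0))
    simpa using this
  rw [tendsto_order]
  constructor
  · intro c hc
    have h1 : ∀ᶠ d in 𝓝[>] (0:ℝ), c * Real.exp (2 * d) < A := by
      have := hexp.const_mul c
      exact this.eventually (gt_mem_nhds (by linarith))
    obtain ⟨d, hd1, hd0⟩ := (h1.and self_mem_nhdsWithin).exists
    have hd0 : 0 < d := hd0
    have h2 : ∀ᶠ R in atTop, c * Real.exp (2 * d) * κ + M * (κ - ∫ v in (-R)..R, fejK v) < A * (∫ v in (-R)..R, fejK v) := by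
      have e1 : Tendsto (fun R : ℝ => A * (∫ v in (-R)..R, fejK v) - (c * Real.exp (2 * d) * κ + M * (κ - ∫ v in (-R)..R, fejK v)))
        atTop (𝓝 (A * κ - (c * Real.exp (2 * d) * κ + M * (κ - κ)))) :=
        (hR.const_mul A).sub (tendsto_const_nhds.add ((tendsto_const_nhds.sub hR).const_mul M))
      have := e1.eventually (lt_mem_nhds (show 0 < _ by nlinarith))
      filter_upwards [this] with R hR
      linarith
    obtain ⟨R, hR1, hR0⟩ := (h2.and (eventually_gt_atTop 0)).exists
    have hl : 0 < R / d := by positivity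
    have h3 := (hP (R / d) hl).eventually (lt_mem_nhds (show -(A * (∫ v in (-R)..R, fejK v) - (c * Real.exp (2 * d) * κ + M * (κ - ∫ v in (-R)..R, fejK v))) < 0 by linarith))
    have h4 : ∀ᶠ y in atTop, c < B (y + d) := by
      filter_upwards [h3, eventually_gt_atTop d] with y h3 hy
      have := (wi_ineq B hBm hB0 M A hA hBM hmono (R / d) d hl hd0 y hy).2
      rw [div_mul_cancel₀ _ hd0.ne'] at this
      have h5 : c * (Real.exp (2 * d) * κ) < B (y + d) * (Real.exp (2 * d) * κ) := by linarith
      exact lt_of_mul_lt_mul_right h5 (by positivity)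
    have := (tendsto_atTop_add_const_right atTop (-d) tendsto_id).eventually h4
    filter_upwards [this] with y hy
    simpa using hy
  · intro c hc
    have h1 : ∀ᶠ d in 𝓝[>] (0:ℝ), A * Real.exp (2 * d) < c := by
      have := hexp.const_mul A
      exact this.eventually (gt_mem_nhds (by linarith))
    obtain ⟨d, hd1, hd0⟩ := (h1.and self_mem_nhdsWithin).exists
    have hd0 : 0 < d := hd0
    have hcd : A < c * Real.exp (-(2 * d)) := by
      rw [Real.exp_neg, ← div_eq_mul_inv, lt_div_iff₀ (Real.exp_pos _)]
      exact hd1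
    have h2 : ∀ᶠ R in atTop, A * κ < c * Real.exp (-(2 * d)) * (∫ v in (-R)..R, fejK v) := by
      have e1 := hR.const_mul (c * Real.exp (-(2 * d)))
      exact e1.eventually (lt_mem_nhds (by nlinarith))
    obtain ⟨R, ⟨hR1, hR0⟩, hR2⟩ := ((h2.and (eventually_gt_atTop 0)).and (hR.eventually (lt_mem_nhds hκ))).exists
    have hl : 0 < R / d := by positivity
    have h3 := (hP (R / d) hl).eventually (gt_mem_nhds (show 0 < (c * Real.exp (-(2 * d)) * (∫ v in (-R)..R, fejK v)) - A * κ by linarith))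
    have h4 : ∀ᶠ y in atTop, B (y - d) < c := by
      filter_upwards [h3, eventually_gt_atTop d] with y h3 hy
      have := (wi_ineq B hBm hB0 M A hA hBM hmono (R / d) d hl hd0 y hy).1
      rw [div_mul_cancel₀ _ hd0.ne'] at this
      have h5 : B (y - d) * (Real.exp (-(2 * d)) * (∫ v in (-R)..R, fejK v)) < c * (Real.exp (-(2 * d)) * (∫ v in (-R)..R, fejK v)) := by linarith
      exact lt_of_mul_lt_mul_right h5 (by positivity)
    have := (tendsto_atTop_add_const_right atTop d tendsto_id).eventually h4
    filter_upwards [this] with y hy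
    simpa using hy
end WI


section AP
open MeasureTheory Complex Topology ArithmeticFunction

noncomputable def psiA {N : ℕ} (a : ZMod N) (x : ℝ) : ℝ :=
  ∑ k ∈ Finset.Icc 1 ⌊x⌋₊, vonMangoldt.residueClass a k

theorem psiA_mono {N : ℕ} (a : ZMod N) : Monotone (psiA a) := by
  intro x y h
  refine Finset.sum_le_sum_of_subset_of_nonneg ?_ fun i _ _ => vonMangoldt.residueClass_nonneg a i
  exact Finset.Icc_subset_Icc_right (Nat.floor_mono h)

theorem psiA_nonneg {N : ℕ} (a : ZMod N) (x : ℝ) : 0 ≤ psiA a x :=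
  Finset.sum_nonneg fun i _ => vonMangoldt.residueClass_nonneg a i

theorem psiA_le {N : ℕ} (a : ZMod N) (x : ℝ) (hx : 0 ≤ x) : psiA a x ≤ (Real.log 4 + 4) * x := by
  refine le_trans ?_ (Chebyshev.psi_le_const_mul_self hx)
  unfold Chebyshev.psi psiA
  exact Finset.sum_le_sum fun i _ => vonMangoldt.residueClass_le a i

theorem psiA_laplace {N : ℕ} [NeZero N] (a : ZMod N) (s : ℂ) (hs : 0 < s.re) :
    LSeries (fun n => (vonMangoldt.residueClass a n : ℂ)) (s + 1) =
      (s + 1) * ∫ v in Set.Ioi (0:ℝ), ((psiA a (Real.exp v) * Real.exp (-v) : ℝ) : ℂ) * cexp (-(s * v)) := by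
  rw [LSeries_eq_mul_integral_of_nonneg (vonMangoldt.residueClass a) (r := 1) zero_le_one (by simpa using hs)
    ?_ (vonMangoldt.residueClass_nonneg a)]
  · congr 1
    have := integral_image_eq_integral_deriv_smul_of_monotoneOn (s := Set.Ioi (0:ℝ)) (f := Real.exp)
      (f' := Real.exp) measurableSet_Ioi (fun x _ => (Real.hasDerivAt_exp x).hasDerivWithinAt)
      (Real.exp_monotone.monotoneOn _)
      (fun t : ℝ => (∑ k ∈ Finset.Icc 1 ⌊t⌋₊, (vonMangoldt.residueClass a k : ℂ)) * (t : ℂ) ^ (-(s + 1 + 1)))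
    rw [Real.image_exp_Ioi, Real.exp_zero] at this
    rw [this]
    congr 1; ext v
    rw [← Complex.ofReal_sum, Complex.cpow_def_of_ne_zero (by exact_mod_cast (Real.exp_pos v).ne'),
      ← Complex.ofReal_log (Real.exp_pos v).le, Real.log_exp]
    change _ • (((psiA a (Real.exp v) : ℝ) : ℂ) * _) = _
    rw [Complex.real_smul]
    push_cast
    rw [mul_left_comm, mul_assoc, ← Complex.exp_add, ← Complex.exp_add]
    congr 2; ring
  · refine IsBigO.of_bound (Real.log 4 + 4) (Eventually.of_forall fun n => ?_)
    have h1 := psiA_le a n (Nat.cast_nonneg n)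
    have h2 := psiA_nonneg a n
    unfold psiA at h1 h2
    rw [Nat.floor_natCast] at h1 h2
    simpa [abs_of_nonneg h2] using h1

theorem psiA_tendsto {N : ℕ} [NeZero N] (a : ZMod N) (ha : IsUnit a) :
    Tendsto (fun x : ℝ => psiA a x / x) atTop (𝓝 (N.totient : ℝ)⁻¹) := by
  set A : ℝ := (N.totient : ℝ)⁻¹ with hA
  have hA0 : 0 < A := inv_pos.2 (by exact_mod_cast Nat.totient_pos.2 (NeZero.pos N))
  set B : ℝ → ℝ := fun v => psiA a (Real.exp v) * Real.exp (-v) with hB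
  have hB0 : ∀ v, 0 ≤ B v := fun v => mul_nonneg (psiA_nonneg a _) (Real.exp_pos _).le
  have hBM : ∀ v, B v ≤ Real.log 4 + 4 := by
    intro v
    have := psiA_le a (Real.exp v) (Real.exp_pos v).le
    simp only [hB, Real.exp_neg]
    rw [← div_eq_mul_inv, div_le_iff₀ (Real.exp_pos v)]
    exact this
  have hBm : Measurable B := by
    have := (psiA_mono a).measurable
    fun_prop
  have hIntg : ∀ s : ℂ, 0 < s.re → IntegrableOn (fun v : ℝ => cexp (-(s * v))) (Set.Ioi 0) := by
    intro s hs
    simpa [neg_mul] using integrableOn_exp_mul_complex_Ioi (a := -s) (by simpa using hs) 0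
  have hT : Tendsto B atTop (𝓝 A) := by
    refine wi_tauber B hBm hB0 (Real.log 4 + 4) A hA0 (fun v _ => hBM v) ?_
      (fun s => vonMangoldt.LFunctionResidueClassAux a (s + 1) / (s + 1) - A / (s + 1)) ?_ ?_
    · intro u v huv
      simp only [hB]
      rw [mul_assoc, ← Real.exp_add]
      refine mul_le_mul (psiA_mono a (Real.exp_le_exp.2 huv)) (Real.exp_le_exp.2 (by linarith)) (Real.exp_pos _).le (psiA_nonneg a _)
    · have hne : ∀ s ∈ {s : ℂ | 0 ≤ s.re}, s + 1 ≠ 0 := by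
        intro s hs h
        have h1 := congrArg Complex.re h
        simp at h1
        have : 0 ≤ s.re := hs
        linarith
      refine ContinuousOn.sub (ContinuousOn.div ?_ (by fun_prop) hne) (ContinuousOn.div (by fun_prop) (by fun_prop) hne)
      refine (vonMangoldt.continuousOn_LFunctionResidueClassAux a).comp (by fun_prop) ?_
      intro s hs
      have : 0 ≤ s.re := hs
      simpa using this
    · intro s hs
      have h1 := vonMangoldt.eqOn_LFunctionResidueClassAux ha (x := s + 1) (by simpa using hs)
      simp only at h1
      rw [h1, psiA_laplace a s hs, add_sub_cancel_right]
      have hs0 : s ≠ 0 := fun h => by simp [h] at hs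
      have hs1 : s + 1 ≠ 0 := fun h => by
        have h1 := congrArg Complex.re h
        simp at h1
        linarith
      have h2 : ∫ v in Set.Ioi (0:ℝ), cexp (-(s * v)) = 1 / s := by
        have := integral_exp_mul_complex_Ioi (a := -s) (by simpa using hs) 0
        simpa [neg_mul] using this
      have h3 : ∫ v in Set.Ioi (0:ℝ), ((B v - A : ℝ) : ℂ) * cexp (-(s * v)) =
          (∫ v in Set.Ioi (0:ℝ), (B v : ℂ) * cexp (-(s * v))) - A * (1 / s) := by
        rw [← h2, ← integral_const_mul, ← integral_sub]
        · congr 1; ext v; push_cast; ring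
        · refine (hIntg s hs).bdd_mul (c := Real.log 4 + 4) (by fun_prop) (Eventually.of_forall fun v => ?_)
          rw [norm_real, Real.norm_eq_abs, abs_of_nonneg (hB0 v)]
          exact hBM v
        · exact (hIntg s hs).const_mul _
      rw [h3, hA]
      push_cast
      simp only [hB]
      push_cast
      field_simp
      ring
  have := hT.comp Real.tendsto_log_atTop
  refine this.congr' ?_
  filter_upwards [eventually_gt_atTop 0] with x hx
  simp only [Function.comp, hB]
  rw [Real.exp_neg, Real.exp_log hx, div_eq_mul_inv]

/-- number of primes up to `n` in the class -/
noncomputable def piA {N : ℕ} (a : ZMod N) (n : ℕ) : ℕ :=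
  ((Finset.range (n + 1)).filter (fun p : ℕ => p.Prime ∧ (p : ZMod N) = a)).card

noncomputable def thetaA {N : ℕ} (a : ZMod N) (x : ℝ) : ℝ :=
  ∑ p ∈ (Finset.range (⌊x⌋₊ + 1)).filter (fun p : ℕ => p.Prime ∧ (p : ZMod N) = a), Real.log p

theorem psiA_sub_thetaA {N : ℕ} (a : ZMod N) (x : ℝ) :
    0 ≤ psiA a x - thetaA a x ∧ psiA a x - thetaA a x ≤ Chebyshev.psi x - Chebyshev.theta x := by
  have h : psiA a x - thetaA a x = ∑ k ∈ (Finset.Icc 1 ⌊x⌋₊).filter (fun k => ¬ k.Prime), vonMangoldt.residueClass a k := by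
    unfold psiA thetaA
    rw [← Finset.sum_filter_add_sum_filter_not (Finset.Icc 1 ⌊x⌋₊) (fun k => k.Prime)]
    rw [add_sub_right_comm, add_eq_right, sub_eq_zero]
    rw [show (Finset.range (⌊x⌋₊ + 1)).filter (fun p : ℕ => p.Prime ∧ (p : ZMod N) = a) =
      ((Finset.Icc 1 ⌊x⌋₊).filter (fun k => k.Prime)).filter (fun p : ℕ => (p : ZMod N) = a) by
      ext p
      simp only [Finset.mem_filter, Finset.mem_range, Finset.mem_Icc]
      constructor
      · rintro ⟨h1, h2, h3⟩; exact ⟨⟨⟨h2.one_le, by omega⟩, h2⟩, h3⟩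
      · rintro ⟨⟨⟨h0, h1⟩, h2⟩, h3⟩; exact ⟨by omega, h2, h3⟩]
    rw [Finset.sum_filter _ _ (s := (Finset.Icc 1 ⌊x⌋₊).filter (fun k => k.Prime))]
    refine Finset.sum_congr rfl fun p hp => ?_
    have hp' := (Finset.mem_filter.1 hp).2
    simp only [vonMangoldt.residueClass, Set.indicator_apply, Set.mem_ofPred_eq]
    rw [vonMangoldt_apply_prime hp']
  have h0 := fun k => vonMangoldt.residueClass_nonneg a k
  refine ⟨h ▸ Finset.sum_nonneg fun i _ => h0 i, ?_⟩
  rw [h, Chebyshev.psi_sub_theta_eq_sum_not_prime]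
  refine (Finset.sum_le_sum fun i _ => vonMangoldt.residueClass_le a i).trans (le_of_eq ?_)
  refine Finset.sum_congr ?_ fun _ _ => rfl
  ext p; simp [Nat.succ_le_iff]

theorem piA_sub_thetaA {N : ℕ} (a : ZMod N) (x : ℝ) (hx : 1 < x) :
    0 ≤ piA a ⌊x⌋₊ * Real.log x - thetaA a x ∧
    piA a ⌊x⌋₊ * Real.log x - thetaA a x ≤ Nat.primeCounting ⌊x⌋₊ * Real.log x - Chebyshev.theta x := by
  have h1 : piA a ⌊x⌋₊ * Real.log x - thetaA a x =
    ∑ p ∈ (Finset.range (⌊x⌋₊ + 1)).filter (fun p : ℕ => p.Prime ∧ (p : ZMod N) = a), (Real.log x - Real.log p) := by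
    rw [Finset.sum_sub_distrib]; simp [piA, thetaA]
  have h2 : Nat.primeCounting ⌊x⌋₊ * Real.log x - Chebyshev.theta x =
    ∑ p ∈ (Finset.range (⌊x⌋₊ + 1)).filter (fun p => p.Prime), (Real.log x - Real.log p) := by
    rw [Finset.sum_sub_distrib]
    congr 1
    · rw [Finset.sum_const, nsmul_eq_mul, Nat.primeCounting, Nat.primeCounting', Nat.count_eq_card_filter_range]
    · unfold Chebyshev.theta
      refine Finset.sum_congr ?_ fun _ _ => rfl
      ext p
      simp only [Finset.mem_filter, Finset.mem_range, Finset.mem_Ioc]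
      constructor
      · rintro ⟨⟨_, h1⟩, h2⟩; exact ⟨by omega, h2⟩
      · rintro ⟨h1, h2⟩; exact ⟨⟨h2.pos, by omega⟩, h2⟩
  have h3 : ∀ p ∈ (Finset.range (⌊x⌋₊ + 1)).filter (fun p => p.Prime), 0 ≤ Real.log x - Real.log p := by
    intro p hp
    simp only [Finset.mem_filter, Finset.mem_range] at hp
    have h4 : (p : ℝ) ≤ x := (Nat.le_floor_iff (by linarith)).1 (by omega)
    have := Real.log_le_log (by exact_mod_cast hp.2.pos) h4
    linarith
  have hsub : (Finset.range (⌊x⌋₊ + 1)).filter (fun p : ℕ => p.Prime ∧ (p : ZMod N) = a) ⊆ (Finset.range (⌊x⌋₊ + 1)).filter (fun p => p.Prime) := by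
    intro p hp
    simp only [Finset.mem_filter] at hp ⊢
    exact ⟨hp.1, hp.2.1⟩
  rw [h1, h2]
  exact ⟨Finset.sum_nonneg fun p hp => h3 p (hsub hp), Finset.sum_le_sum_of_subset_of_nonneg hsub fun p hp _ => h3 p hp⟩

theorem pnt_ap {N : ℕ} [NeZero N] (a : ZMod N) (ha : IsUnit a) :
    Tendsto (fun x : ℝ => piA a ⌊x⌋₊ * Real.log x / x) atTop (𝓝 (N.totient : ℝ)⁻¹) := by
  have l1 : Tendsto (fun x : ℝ => (Chebyshev.psi x - Chebyshev.theta x) / x) atTop (𝓝 0) := by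
    have h1 : (fun x : ℝ => Chebyshev.psi x - Chebyshev.theta x) =o[atTop] (fun x : ℝ => x) := by
      refine Chebyshev.isBigO_psi_sub_theta_sqrt.trans_isLittleO ?_
      rw [isLittleO_iff_tendsto' (by filter_upwards [eventually_gt_atTop 0] with x hx h; linarith)]
      refine (Real.tendsto_sqrt_atTop.inv_tendsto_atTop).congr' ?_
      filter_upwards [eventually_gt_atTop 0] with x hx
      rw [Pi.inv_apply, Real.sqrt_div_self']
      simp
    exact h1.tendsto_div_nhds_zero
  have l2 : Tendsto (fun x : ℝ => (Nat.primeCounting ⌊x⌋₊ * Real.log x - Chebyshev.theta x) / x) atTop (𝓝 0) := by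
    have h1 : (fun x : ℝ => Nat.primeCounting ⌊x⌋₊ * Real.log x - Chebyshev.theta x) =o[atTop] (fun x : ℝ => x) := by
      have h2 := Chebyshev.primeCounting_sub_theta_div_log_isBigO.mul (isBigO_refl Real.log atTop)
      have h3 : (fun x : ℝ => x / Real.log x ^ 2 * Real.log x) =o[atTop] (fun x : ℝ => x) := by
        rw [isLittleO_iff_tendsto' (by filter_upwards [eventually_gt_atTop 0] with x hx h; linarith)]
        have := Real.tendsto_log_atTop.inv_tendsto_atTop
        refine this.congr' ?_
        filter_upwards [eventually_gt_atTop 1] with x hx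
        have := Real.log_pos hx
        simp only [Pi.inv_apply]
        field_simp
      refine (h2.trans_isLittleO h3).congr' ?_ EventuallyEq.rfl
      filter_upwards [eventually_gt_atTop 1] with x hx
      have := Real.log_pos hx
      field_simp
    exact h1.tendsto_div_nhds_zero
  have l3 := psiA_tendsto a ha
  have l4 : Tendsto (fun x : ℝ => psiA a x / x - (Chebyshev.psi x - Chebyshev.theta x) / x) atTop (𝓝 (N.totient : ℝ)⁻¹) := by
    simpa using l3.sub l1
  have l5 : Tendsto (fun x : ℝ => psiA a x / x + (Nat.primeCounting ⌊x⌋₊ * Real.log x - Chebyshev.theta x) / x) atTop (𝓝 (N.totient : ℝ)⁻¹) := by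
    simpa using l3.add l2
  refine tendsto_of_tendsto_of_tendsto_of_le_of_le' l4 l5 ?_ ?_
  · filter_upwards [eventually_gt_atTop 1] with x hx
    have h1 := psiA_sub_thetaA a x
    have h2 := piA_sub_thetaA a x hx
    rw [← sub_div]
    gcongr
    linarith
  · filter_upwards [eventually_gt_atTop 1] with x hx
    have h1 := psiA_sub_thetaA a x
    have h2 := piA_sub_thetaA a x hx
    rw [← add_div]
    gcongr
    linarith
end AP


section Mertens
open Topology

theorem stolz (f g : ℕ → ℝ) (c : ℝ) (hg : ∀ᶠ j in atTop, 0 ≤ g j)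
    (hgs : Tendsto (fun n => ∑ j ∈ Finset.range n, g j) atTop atTop)
    (h : (fun j => f j - c * g j) =o[atTop] g) :
    Tendsto (fun n => (∑ j ∈ Finset.range n, f j) / ∑ j ∈ Finset.range n, g j) atTop (𝓝 c) := by
  obtain ⟨n0, hn0⟩ := eventually_atTop.1 hg
  set C := ∑ j ∈ Finset.range n0, abs (g j - abs (g j)) with hC
  have hb : ∀ n, ∑ j ∈ Finset.range n, |g j| ≤ (∑ j ∈ Finset.range n, g j) + C := by
    intro n
    have : ∑ j ∈ Finset.range n, (|g j| - g j) ≤ C := by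
      calc ∑ j ∈ Finset.range n, (|g j| - g j) ≤ ∑ j ∈ Finset.range n, abs (g j - abs (g j)) :=
            Finset.sum_le_sum fun j _ => by rw [abs_sub_comm]; exact le_abs_self _
        _ ≤ ∑ j ∈ Finset.range (max n n0), abs (g j - abs (g j)) :=
            Finset.sum_le_sum_of_subset_of_nonneg (Finset.range_subset_range.2 (le_max_left _ _)) fun _ _ _ => abs_nonneg _
        _ = C := by
            refine (Finset.sum_subset (Finset.range_subset_range.2 (le_max_right _ _)) ?_).symm
            intro j _ hj
            have : n0 ≤ j := by simpa using hj
            rw [abs_of_nonneg (hn0 j this)]; simp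
    rw [Finset.sum_sub_distrib] at this
    linarith
  have hs1 : Tendsto (fun n => ∑ j ∈ Finset.range n, |g j|) atTop atTop :=
    tendsto_atTop_mono (fun n => Finset.sum_le_sum fun j _ => le_abs_self _) hgs
  have h1 : (fun n => ∑ j ∈ Finset.range n, (f j - c * g j)) =o[atTop] fun n => ∑ j ∈ Finset.range n, |g j| :=
    IsLittleO.sum_range h.abs_right (fun j => abs_nonneg _) hs1
  have h2 : (fun n => ∑ j ∈ Finset.range n, |g j|) =O[atTop] fun n => ∑ j ∈ Finset.range n, g j := by
    refine IsBigO.of_bound 2 ?_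
    filter_upwards [hgs.eventually_ge_atTop C, hgs.eventually_ge_atTop 0] with n hn hn'
    rw [Real.norm_eq_abs, Real.norm_eq_abs, abs_of_nonneg hn', abs_of_nonneg (Finset.sum_nonneg fun _ _ => abs_nonneg _)]
    have := hb n
    linarith
  have h3 := (h1.trans_isBigO h2).tendsto_div_nhds_zero
  have h4 := h3.add_const c
  rw [zero_add] at h4
  refine h4.congr' ?_
  filter_upwards [hgs.eventually_gt_atTop 0] with n hn
  rw [Finset.sum_sub_distrib, ← Finset.mul_sum]
  field_simp
  ring

noncomputable def uA {N : ℕ} (a : ZMod N) (j : ℕ) : ℝ := if j.Prime ∧ (j : ZMod N) = a then 1 / (j : ℝ) else 0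

noncomputable def Es {N : ℕ} (a : ZMod N) (n : ℕ) : ℝ := ∑ j ∈ Finset.range n, uA a j

theorem piA_le {N : ℕ} (a : ZMod N) (n : ℕ) : piA a n ≤ n := by
  unfold piA
  have : (Finset.range (n + 1)).filter (fun p : ℕ => p.Prime ∧ (p : ZMod N) = a) ⊆ Finset.Icc 1 n := by
    intro p hp
    simp only [Finset.mem_filter, Finset.mem_range] at hp
    exact Finset.mem_Icc.2 ⟨hp.2.1.one_le, by omega⟩
  simpa using Finset.card_le_card this

theorem piA_succ {N : ℕ} (a : ZMod N) (n : ℕ) :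
    (piA a (n + 1) : ℝ) = piA a n + if (n+1).Prime ∧ ((n + 1 : ℕ) : ZMod N) = a then 1 else 0 := by
  unfold piA
  rw [Finset.range_add_one (n := n + 1), Finset.filter_insert]
  split_ifs
  · rw [Finset.card_insert_of_notMem (by simp)]; push_cast; rfl
  · simp

theorem Es_abel {N : ℕ} (a : ZMod N) (n : ℕ) :
    Es a (n + 1) = piA a n / (n + 1 : ℝ) + ∑ j ∈ Finset.range (n + 1), piA a j / ((j : ℝ) * (j + 1)) := by
  induction n with
  | zero =>
    have : piA a 0 = 0 := Nat.le_zero.1 (piA_le a 0)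
    simp [Es, this, uA, Nat.not_prime_zero]
  | succ n ih =>
    have : Es a (n + 1 + 1) = Es a (n + 1) + uA a (n + 1) := by
      unfold Es; rw [Finset.sum_range_succ]
    rw [this, ih, Finset.sum_range_succ _ (n + 1), piA_succ]
    have hu : uA a (n + 1) = (if (n+1).Prime ∧ ((n + 1 : ℕ) : ZMod N) = a then 1 else 0) / (n + 1 : ℝ) := by
      unfold uA
      split_ifs <;> simp
    rw [hu]
    set t : ℝ := if (n+1).Prime ∧ ((n + 1 : ℕ) : ZMod N) = a then 1 else 0
    push_cast
    have h1 : (n : ℝ) + 1 ≠ 0 := by positivity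
    have h2 : (n : ℝ) + 1 + 1 ≠ 0 := by positivity
    field_simp
    ring

noncomputable def LL (n : ℕ) : ℝ := Real.log (Real.log n)

theorem LL_tendsto : Tendsto LL atTop atTop :=
  Real.tendsto_log_atTop.comp (Real.tendsto_log_atTop.comp tendsto_natCast_atTop_atTop)

theorem log_succ_div : Tendsto (fun j : ℕ => Real.log j / Real.log (j + 1)) atTop (𝓝 1) := by
  have h1 : Tendsto (fun j : ℕ => 1 - 1 / (j:ℝ)) atTop (𝓝 1) := by
    simpa using (tendsto_const_nhds (x := (1:ℝ))).sub tendsto_one_div_atTop_nhds_zero_nat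
  refine tendsto_of_tendsto_of_tendsto_of_le_of_le' h1 tendsto_const_nhds ?_ ?_
  · filter_upwards [eventually_ge_atTop 3] with j hj
    have hj' : (3:ℝ) ≤ j := by exact_mod_cast hj
    have hl : 1 ≤ Real.log (j + 1) := by
      rw [Real.le_log_iff_exp_le (by linarith)]
      have := Real.exp_one_lt_d9
      linarith
    rw [le_div_iff₀ (by linarith)]
    have h2 : Real.log (j + 1) - Real.log j ≤ 1 / j := by
      rw [← Real.log_div (by linarith) (by linarith)]
      have := Real.log_le_sub_one_of_pos (show 0 < ((j:ℝ)+1)/j by positivity)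
      have h3 : ((j:ℝ)+1)/j - 1 = 1 / j := by field_simp; ring
      linarith
    have h4 : 1 / (j:ℝ) ≤ 1 / j * Real.log (j + 1) := le_mul_of_one_le_right (by positivity) hl
    linarith
  · filter_upwards [eventually_ge_atTop 3] with j hj
    have hj' : (3:ℝ) ≤ j := by exact_mod_cast hj
    refine div_le_one_of_le₀ (Real.log_le_log (by linarith) (by linarith)) (Real.log_nonneg (by linarith))

theorem LL_diff (j : ℕ) (hj : 3 ≤ j) :
    1 / ((j + 1) * Real.log (j + 1)) ≤ LL (j + 1) - LL j ∧ LL (j + 1) - LL j ≤ 1 / (j * Real.log j) := by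
  have hj' : (3:ℝ) ≤ j := by exact_mod_cast hj
  have hl0 : 0 < Real.log j := Real.log_pos (by linarith)
  have hl1 : 0 < Real.log (j + 1) := Real.log_pos (by linarith)
  have key : ∀ a b : ℝ, 0 < a → 0 < b → (b - a) / b ≤ Real.log b - Real.log a ∧ Real.log b - Real.log a ≤ (b - a) / a := by
    intro a b ha hb
    constructor
    · have := Real.log_le_sub_one_of_pos (show 0 < a / b by positivity)
      rw [Real.log_div ha.ne' hb.ne'] at this
      have h3 : (b - a) / b = 1 - a / b := by field_simp
      linarith
    · have := Real.log_le_sub_one_of_pos (show 0 < b / a by positivity)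
      rw [Real.log_div hb.ne' ha.ne'] at this
      have h3 : (b - a) / a = b / a - 1 := by field_simp
      linarith
  have k1 := key j (j + 1) (by linarith) (by linarith)
  have k2 := key _ _ hl0 hl1
  simp only [LL]
  push_cast
  rw [add_sub_cancel_left] at k1
  constructor
  · refine le_trans ?_ k2.1
    rw [← div_div]
    gcongr
    exact k1.1
  · refine k2.2.trans ?_
    rw [← div_div]
    gcongr
    exact k1.2

theorem Es_tendsto {N : ℕ} [NeZero N] (a : ZMod N) (ha : IsUnit a) :
    Tendsto (fun n => Es a n / LL n) atTop (𝓝 (N.totient : ℝ)⁻¹) := by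
  set A := (N.totient : ℝ)⁻¹
  have hpnt : Tendsto (fun j : ℕ => (piA a j : ℝ) * Real.log j / j) atTop (𝓝 A) := by
    have := (pnt_ap a ha).comp tendsto_natCast_atTop_atTop (α := ℕ)
    simpa [Function.comp_def] using this
  have hj1 : Tendsto (fun j : ℕ => (j : ℝ) / (j + 1)) atTop (𝓝 1) := by
    exact tendsto_natCast_div_add_atTop (1:ℝ)
  have hratio : Tendsto (fun j : ℕ => ((LL (j + 1) - LL j) * (j * Real.log j))) atTop (𝓝 1) := by
    have h1 := hj1.mul log_succ_div
    rw [one_mul] at h1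
    refine tendsto_of_tendsto_of_tendsto_of_le_of_le' h1 tendsto_const_nhds ?_ ?_
    · filter_upwards [eventually_ge_atTop 3] with j hj
      have hj' : (3:ℝ) ≤ j := by exact_mod_cast hj
      have hl0 : 0 < Real.log j := Real.log_pos (by linarith)
      have := mul_le_mul_of_nonneg_right (LL_diff j hj).1 (show 0 ≤ j * Real.log j by positivity)
      refine le_trans (le_of_eq ?_) this
      rw [div_mul_div_comm]; ring
    · filter_upwards [eventually_ge_atTop 3] with j hj
      have hj' : (3:ℝ) ≤ j := by exact_mod_cast hj
      have hl0 : 0 < Real.log j := Real.log_pos (by linarith)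
      have := (LL_diff j hj).2
      rwa [le_div_iff₀ (by positivity)] at this
  have hpos : ∀ᶠ j : ℕ in atTop, 0 < LL (j + 1) - LL j := by
    filter_upwards [eventually_ge_atTop 3] with j hj
    have hj' : (3:ℝ) ≤ j := by exact_mod_cast hj
    have hl0 : 0 < Real.log (j + 1) := Real.log_pos (by linarith)
    refine lt_of_lt_of_le (by positivity) (LL_diff j hj).1
  have hsum : ∀ n, ∑ j ∈ Finset.range n, (LL (j + 1) - LL j) = LL n := by
    intro n
    rw [Finset.sum_range_sub]
    simp [LL]
  have hw := stolz (fun j => piA a j / ((j : ℝ) * (j + 1))) (fun j => LL (j + 1) - LL j) A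
    (hpos.mono fun j h => h.le) (by simpa only [hsum] using LL_tendsto) ?_
  · simp only [hsum] at hw
    have h0 : Tendsto (fun n : ℕ => (piA a n / (n + 1 : ℝ)) / LL (n + 1)) atTop (𝓝 0) := by
      have h1 : Tendsto (fun n : ℕ => 1 / LL (n + 1)) atTop (𝓝 0) := by
        have := (LL_tendsto.comp (tendsto_add_atTop_nat 1)).inv_tendsto_atTop
        simpa [Function.comp_def, Pi.inv_def] using this
      refine tendsto_of_tendsto_of_tendsto_of_le_of_le' tendsto_const_nhds h1 ?_ ?_
      · filter_upwards [(LL_tendsto.comp (tendsto_add_atTop_nat 1)).eventually_gt_atTop 0] with n hn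
        have : 0 < LL (n + 1) := hn
        positivity
      · filter_upwards [(LL_tendsto.comp (tendsto_add_atTop_nat 1)).eventually_gt_atTop 0] with n hn
        have : 0 < LL (n + 1) := hn
        gcongr
        rw [div_le_one (by positivity)]
        have : (piA a n : ℝ) ≤ n := by exact_mod_cast piA_le a n
        linarith
    have h2 := h0.add (hw.comp (tendsto_add_atTop_nat 1))
    rw [zero_add] at h2
    refine (tendsto_add_atTop_iff_nat 1).1 (h2.congr fun n => ?_)
    simp only [Function.comp]
    rw [Es_abel, add_div]
  · rw [isLittleO_iff_tendsto' (by filter_upwards [hpos] with j hj h; exact absurd h hj.ne')]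
    have h3 := (hpnt.mul hj1).div hratio one_ne_zero
    have h4 := h3.sub_const A
    rw [mul_one, div_one, sub_self] at h4
    refine h4.congr' ?_
    filter_upwards [hpos, eventually_ge_atTop 3] with j hj hj3
    have hj' : (3:ℝ) ≤ j := by exact_mod_cast hj3
    have hl0 : 0 < Real.log j := Real.log_pos (by linarith)
    simp only [Pi.div_apply]
    rw [sub_div, mul_div_cancel_right₀ _ hj.ne']
    congr 1
    field_simp

noncomputable def Ts {N : ℕ} (m : ℕ → ZMod N) : ℕ → ℕ → ℝ
  | 0, _ => 1
  | r + 1, n => ∑ j ∈ Finset.range n, uA (m r) j * Ts m r (j + 1)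

theorem Ts_tendsto {N : ℕ} [NeZero N] (m : ℕ → ZMod N) (hm : ∀ i, IsUnit (m i)) (r : ℕ) :
    Tendsto (fun n => Ts m r n / LL n ^ r) atTop (𝓝 ((N.totient : ℝ)⁻¹ ^ r / r.factorial)) := by
  have hA0 : 0 < (N.totient : ℝ)⁻¹ := inv_pos.2 (by exact_mod_cast Nat.totient_pos.2 (NeZero.pos N))
  set A := (N.totient : ℝ)⁻¹
  induction r with
  | zero => simp [Ts]
  | succ r ih =>
    have hE := Es_tendsto (m r) (hm r)
    set E := Es (m r) with hEd
    have hEtop : Tendsto E atTop atTop := by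
      have := hE.pos_mul_atTop hA0 LL_tendsto
      refine this.congr' ?_
      filter_upwards [LL_tendsto.eventually_gt_atTop 0] with n hn
      field_simp
    have hEs : ∀ j, E (j + 1) = E j + uA (m r) j := fun j => Finset.sum_range_succ _ _
    have hu0 : ∀ j, 0 ≤ uA (m r) j := fun j => by unfold uA; split_ifs <;> positivity
    have hu1 : ∀ j, uA (m r) j ≤ 1 := fun j => by
      unfold uA; split_ifs with h
      · exact div_le_one_of_le₀ (by exact_mod_cast h.1.one_le) (by positivity)
      · norm_num
    have hq : Tendsto (fun j => E j / E (j + 1)) atTop (𝓝 1) := by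
      have h1 : Tendsto (fun j => 1 - 1 / E (j + 1)) atTop (𝓝 1) := by
        have := (hEtop.comp (tendsto_add_atTop_nat 1)).inv_tendsto_atTop.const_sub 1
        simpa [Function.comp_def, Pi.inv_def] using this
      refine tendsto_of_tendsto_of_tendsto_of_le_of_le' h1 tendsto_const_nhds ?_ ?_
      · filter_upwards [(hEtop.comp (tendsto_add_atTop_nat 1)).eventually_gt_atTop 0] with j hj
        have hj : 0 < E (j + 1) := hj
        rw [le_div_iff₀ hj, sub_mul, one_mul, div_mul_cancel₀ _ hj.ne', hEs]
        have := hu1 j; linarith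
      · filter_upwards [(hEtop.comp (tendsto_add_atTop_nat 1)).eventually_gt_atTop 0] with j hj
        have hj : 0 < E (j + 1) := hj
        rw [div_le_one hj, hEs]
        have := hu0 j; linarith
    set H : ℕ → ℝ := fun j => ∑ i ∈ Finset.range (r + 1), E (j + 1) ^ i * E j ^ (r + 1 - 1 - i) with hH
    have hHu : ∀ j, E (j + 1) ^ (r + 1) - E j ^ (r + 1) = uA (m r) j * H j := by
      intro j
      rw [← (Commute.all _ _).geom_sum₂_mul, hEs j, add_sub_cancel_left, ← hEs j, mul_comm]
    have hHlim : Tendsto (fun j => H j / E (j + 1) ^ r) atTop (𝓝 (r + 1)) := by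
      have h1 : Tendsto (fun j => ∑ i ∈ Finset.range (r + 1), (E j / E (j + 1)) ^ (r - i)) atTop
          (𝓝 (∑ i ∈ Finset.range (r + 1), (1:ℝ) ^ (r - i))) :=
        tendsto_finsetSum _ fun i _ => hq.pow _
      simp only [one_pow, Finset.sum_const, Finset.card_range, nsmul_eq_mul, mul_one] at h1
      push_cast at h1
      refine h1.congr' ?_
      filter_upwards [(hEtop.comp (tendsto_add_atTop_nat 1)).eventually_gt_atTop 0] with j hj
      have hj : 0 < E (j + 1) := hj
      simp only [hH]
      rw [Finset.sum_div]
      refine Finset.sum_congr rfl fun i hi => ?_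
      have hi : i ≤ r := by simpa [Nat.lt_succ_iff] using hi
      rw [div_pow, Nat.add_sub_cancel]
      conv_rhs => rw [← Nat.add_sub_cancel' hi, pow_add, Nat.add_sub_cancel' hi]
      rw [mul_div_mul_left _ _ (by positivity)]
    have hTE : Tendsto (fun j => Ts m r (j + 1) / E (j + 1) ^ r) atTop (𝓝 (1 / r.factorial)) := by
      have h1 := (ih.div (hE.pow r) (by positivity)).comp (tendsto_add_atTop_nat 1)
      rw [div_right_comm, div_self (by positivity)] at h1
      refine h1.congr' ?_
      filter_upwards [(LL_tendsto.comp (tendsto_add_atTop_nat 1)).eventually_gt_atTop 0] with n hn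
      have hn : 0 < LL (n + 1) := hn
      simp only [Function.comp, Pi.div_apply]
      rw [div_pow, div_div_div_cancel_right₀ (by positivity)]
    have hTH : Tendsto (fun j => Ts m r (j + 1) / H j) atTop (𝓝 (1 / (r + 1).factorial)) := by
      have h1 := hTE.div hHlim (by positivity)
      rw [show (1 / (r.factorial : ℝ)) / (r + 1) = 1 / (r + 1).factorial by
        rw [Nat.factorial_succ]; push_cast; field_simp] at h1
      refine h1.congr' ?_
      filter_upwards [(hEtop.comp (tendsto_add_atTop_nat 1)).eventually_gt_atTop 0] with j hj
      have hj : 0 < E (j + 1) := hj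
      simp only [Pi.div_apply]
      rw [div_div_div_cancel_right₀ (by positivity)]
    have hHpos : ∀ᶠ j in atTop, 0 < H j := by
      have := hHlim.eventually (lt_mem_nhds (show (0:ℝ) < r + 1 by positivity))
      filter_upwards [this, (hEtop.comp (tendsto_add_atTop_nat 1)).eventually_gt_atTop 0] with j h1 hj
      have hj : 0 < E (j + 1) := hj
      by_contra hcon
      exact absurd h1 (not_lt.2 (div_nonpos_of_nonpos_of_nonneg (not_lt.1 hcon) (by positivity)))
    have hsum : ∀ n, ∑ j ∈ Finset.range n, uA (m r) j * H j = E n ^ (r + 1) := by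
      intro n
      simp_rw [← hHu]
      rw [Finset.sum_range_sub (fun j => E j ^ (r + 1))]
      simp [hEd, Es]
    have hst := stolz (fun j => uA (m r) j * Ts m r (j + 1)) (fun j => uA (m r) j * H j) (1 / (r + 1).factorial)
      (hHpos.mono fun j hj => mul_nonneg (hu0 j) hj.le)
      (by simp only [hsum]; exact (tendsto_pow_atTop (by omega)).comp hEtop) ?_
    · simp only [hsum] at hst
      have h1 := hst.mul (hE.pow (r + 1))
      rw [show 1 / ((r+1).factorial : ℝ) * A ^ (r + 1) = A ^ (r + 1) / (r+1).factorial by ring] at h1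
      refine h1.congr' ?_
      filter_upwards [hEtop.eventually_gt_atTop 0] with n hn
      simp only [Ts]
      rw [div_pow, div_mul_div_cancel₀ (by positivity)]
    · have h1 : (fun j => Ts m r (j + 1) - 1 / (r + 1).factorial * H j) =o[atTop] H := by
        rw [isLittleO_iff_tendsto' (by filter_upwards [hHpos] with j hj h; exact absurd h hj.ne')]
        have := hTH.sub_const (1 / (r + 1).factorial : ℝ)
        rw [sub_self] at this
        refine this.congr' ?_
        filter_upwards [hHpos] with j hj
        rw [sub_div, mul_div_cancel_right₀ _ hj.ne']
      refine ((isBigO_refl (uA (m r)) atTop).mul_isLittleO h1).congr_left fun j => ?_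
      ring
end Mertens


section Tuples
open Topology

noncomputable def SF {N : ℕ} (m : ℕ → ZMod N) (r y : ℕ) : Finset (Fin r → ℕ) :=
  (Fintype.piFinset fun _ => Finset.range (y + 1)).filter
    (fun q => Monotone q ∧ (∀ i, (q i).Prime) ∧ ∀ i : Fin r, (q i : ZMod N) = m i)

theorem mem_SF {N : ℕ} {m : ℕ → ZMod N} {r y : ℕ} {q : Fin r → ℕ} :
    q ∈ SF m r y ↔ (∀ i, q i ≤ y) ∧ Monotone q ∧ (∀ i, (q i).Prime) ∧ ∀ i : Fin r, (q i : ZMod N) = m i := by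
  simp [SF]

theorem mono_snoc {r : ℕ} (q : Fin r → ℕ) (p : ℕ) :
    Monotone (Fin.snoc q p : Fin (r + 1) → ℕ) ↔ Monotone q ∧ ∀ i, q i ≤ p := by
  constructor
  · intro h
    constructor
    · intro i j hij
      have := h (show i.castSucc ≤ j.castSucc from hij)
      simpa using this
    · intro i
      have := h (Fin.le_last i.castSucc)
      simpa using this
  · rintro ⟨h1, h2⟩ i j hij
    induction j using Fin.lastCases with
    | last =>
      induction i using Fin.lastCases with
      | last => exact le_rfl
      | cast i => simpa using h2 i
    | cast j =>
      induction i using Fin.lastCases with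
      | last => exact absurd hij (not_le.2 (Fin.castSucc_lt_last j))
      | cast i => simpa using h1 hij

theorem mem_SF_snoc {N : ℕ} {m : ℕ → ZMod N} {r y : ℕ} {q : Fin r → ℕ} {p : ℕ} :
    (Fin.snoc q p : Fin (r + 1) → ℕ) ∈ SF m (r + 1) y ↔
      p ≤ y ∧ (p.Prime ∧ (p : ZMod N) = m r) ∧ q ∈ SF m r p := by
  rw [mem_SF, mem_SF, mono_snoc]
  simp only [Fin.forall_fin_succ', Fin.snoc_castSucc, Fin.snoc_last, Fin.val_castSucc, Fin.val_last]
  constructor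
  · rintro ⟨⟨h1, h2⟩, ⟨h3, h4⟩, ⟨h5, h6⟩, h7, h8⟩
    exact ⟨h2, ⟨h6, h8⟩, h4, h3, h5, h7⟩
  · rintro ⟨h2, ⟨h6, h8⟩, h4, h3, h5, h7⟩
    exact ⟨⟨fun i => (h4 i).trans h2, h2⟩, ⟨h3, h4⟩, ⟨h5, h6⟩, h7, h8⟩

theorem SF_sum {N : ℕ} (m : ℕ → ZMod N) (r y : ℕ) (F : (Fin (r + 1) → ℕ) → ℝ) :
    ∑ q ∈ SF m (r + 1) y, F q =
      ∑ p ∈ (Finset.range (y + 1)).filter (fun p : ℕ => p.Prime ∧ (p : ZMod N) = m r),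
        ∑ q ∈ SF m r p, F (Fin.snoc q p) := by
  rw [Finset.sum_sigma']
  symm
  refine Finset.sum_bij' (fun s _ => (Fin.snoc s.2 s.1 : Fin (r + 1) → ℕ))
    (fun t _ => (⟨t (Fin.last r), Fin.init t⟩ : (_ : ℕ) × (Fin r → ℕ))) ?_ ?_ ?_ ?_ ?_
  · rintro ⟨p, q⟩ h
    simp only [Finset.mem_sigma, Finset.mem_filter, Finset.mem_range] at h
    exact mem_SF_snoc.2 ⟨Nat.lt_succ_iff.1 h.1.1, h.1.2, h.2⟩
  · intro t ht
    rw [← Fin.snoc_init_self t, mem_SF_snoc] at ht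
    simp only [Finset.mem_sigma, Finset.mem_filter, Finset.mem_range]
    exact ⟨⟨by omega, ht.2.1⟩, ht.2.2⟩
  · rintro ⟨p, q⟩ h
    simp
  · intro t ht
    simp
  · intro t ht
    rfl

theorem SF_Ts {N : ℕ} (m : ℕ → ZMod N) (r : ℕ) : ∀ y,
    ∑ q ∈ SF m r y, ∏ i, 1 / (q i : ℝ) = Ts m r (y + 1) := by
  induction r with
  | zero =>
    intro y
    have : SF m 0 y = Finset.univ := by
      ext q
      simp only [mem_SF, Finset.mem_univ, iff_true]
      exact ⟨fun i => i.elim0, Subsingleton.monotone q, fun i => i.elim0, fun i => i.elim0⟩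
    rw [this]
    simp [Ts]
  | succ r ih =>
    intro y
    rw [SF_sum]
    simp only [Fin.prod_univ_castSucc, Fin.snoc_castSucc, Fin.snoc_last, ← Finset.sum_mul, ih, Ts]
    rw [Finset.sum_filter]
    refine Finset.sum_congr rfl fun j _ => ?_
    unfold uA
    split_ifs <;> ring

theorem SF_card {N : ℕ} (m : ℕ → ZMod N) (r y : ℕ) : (SF m r y).card ≤ (y + 1) ^ r := by
  refine (Finset.card_filter_le _ _).trans ?_
  simp

theorem SF_mono {N : ℕ} (m : ℕ → ZMod N) (r : ℕ) {y x : ℕ} (h : y ≤ x) : SF m r y ⊆ SF m r x := by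
  intro q hq
  rw [mem_SF] at hq ⊢
  exact ⟨fun i => (hq.1 i).trans h, hq.2⟩

noncomputable def CF {N : ℕ} (m : ℕ → ZMod N) (k x : ℕ) : Finset (Fin k → ℕ) :=
  (SF m k x).filter (fun q => ∏ i, q i ≤ x)

theorem CF_card {N : ℕ} (m : ℕ → ZMod N) (k x : ℕ) :
    ((Finset.range (x + 1)).filter
          (fun n => ∃ p : Fin k → ℕ, Monotone p ∧ (∀ i, (p i).Prime) ∧
            n = ∏ i, p i ∧ ∀ i, (p i : ZMod N) = m i)).card = (CF m k x).card := by
  rw [← Finset.card_image_of_injOn (s := CF m k x) (f := fun q => ∏ i, q i)]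
  · congr 1
    ext n
    simp only [Finset.mem_filter, Finset.mem_range, Finset.mem_image, CF, mem_SF]
    constructor
    · rintro ⟨hn, p, h1, h2, h3, h4⟩
      refine ⟨p, ⟨⟨fun i => ?_, h1, h2, h4⟩, by omega⟩, h3.symm⟩
      have : p i ≤ ∏ i, p i := Nat.le_of_dvd (Finset.prod_pos fun i _ => (h2 i).pos)
        (Finset.dvd_prod_of_mem _ (Finset.mem_univ i))
      omega
    · rintro ⟨p, ⟨⟨h0, h1, h2, h4⟩, h5⟩, h3⟩
      exact ⟨by omega, p, h1, h2, h3.symm, h4⟩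
  · intro p hp q hq hpq
    simp only [CF, Finset.coe_filter, mem_SF, Set.mem_ofPred_eq] at hp hq
    have e1 : (List.ofFn p).Perm (Nat.primeFactorsList (∏ i, p i)) :=
      Nat.primeFactorsList_unique (by rw [List.prod_ofFn]) (by
        intro a ha
        obtain ⟨i, rfl⟩ := (List.mem_ofFn' p a).1 ha
        exact hp.1.2.2.1 i)
    have e2 : (List.ofFn q).Perm (Nat.primeFactorsList (∏ i, p i)) :=
      Nat.primeFactorsList_unique (by rw [List.prod_ofFn]; exact hpq.symm) (by
        intro a ha
        obtain ⟨i, rfl⟩ := (List.mem_ofFn' q a).1 ha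
        exact hq.1.2.2.1 i)
    have s1 := hp.1.2.1.sortedLE_ofFn
    have s2 := hq.1.2.1.sortedLE_ofFn
    exact List.ofFn_injective ((e1.trans e2.symm).eq_of_sortedLE s1 s2)

/-- fibre of `Fin.init` in `CF`. -/
noncomputable def fib {N : ℕ} (m : ℕ → ZMod N) (r x : ℕ) (q : Fin r → ℕ) : Finset (Fin (r + 1) → ℕ) :=
  (CF m (r + 1) x).filter (fun t => Fin.init t = q)

theorem CF_fib {N : ℕ} (m : ℕ → ZMod N) (r x : ℕ) :
    (CF m (r + 1) x).card = ∑ q ∈ SF m r x, (fib m r x q).card := by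
  have hmap : ∀ t ∈ CF m (r + 1) x, (Fin.init t : Fin r → ℕ) ∈ SF m r x := by
    intro t ht'
    unfold CF at ht'
    rw [Finset.mem_filter] at ht'
    have h1 := ht'.1
    rw [← Fin.snoc_init_self t, mem_SF_snoc] at h1
    exact SF_mono m r h1.1 h1.2.2
  have := Finset.card_eq_sum_card_fiberwise (s := CF m (r + 1) x) (t := SF m r x)
    (f := fun t : Fin (r + 1) → ℕ => (Fin.init t : Fin r → ℕ)) (fun t ht => hmap t ht)
  rw [this]
  refine Finset.sum_congr rfl fun q _ => ?_
  unfold fib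
  congr!

theorem mem_fib {N : ℕ} {m : ℕ → ZMod N} {r x : ℕ} {q : Fin r → ℕ} {t : Fin (r + 1) → ℕ} :
    t ∈ fib m r x q ↔ ∃ p : ℕ, t = Fin.snoc q p ∧ p ≤ x ∧ (p.Prime ∧ (p : ZMod N) = m r) ∧ q ∈ SF m r p ∧
      (∏ i, q i) * p ≤ x := by
  unfold fib CF
  rw [Finset.mem_filter, Finset.mem_filter]
  constructor
  · rintro ⟨⟨h1, h2⟩, h3⟩
    refine ⟨t (Fin.last r), ?_, ?_⟩
    · rw [← h3, Fin.snoc_init_self]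
    · rw [← Fin.snoc_init_self t, mem_SF_snoc, h3] at h1
      refine ⟨h1.1, h1.2.1, h1.2.2, ?_⟩
      rw [← h3]
      rw [Fin.prod_univ_castSucc] at h2
      exact h2
  · rintro ⟨p, rfl, h1, h2, h3, h4⟩
    refine ⟨⟨mem_SF_snoc.2 ⟨h1, h2, h3⟩, ?_⟩, Fin.init_snoc _ _⟩
    rw [Fin.prod_univ_castSucc]
    simpa using h4

theorem prodpos {N : ℕ} {m : ℕ → ZMod N} {r y : ℕ} {q : Fin r → ℕ} (h : q ∈ SF m r y) : 0 < ∏ i, q i :=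
  Finset.prod_pos fun i _ => ((mem_SF.1 h).2.2.1 i).pos

theorem fib_le {N : ℕ} (m : ℕ → ZMod N) (r x : ℕ) (q : Fin r → ℕ) (hq : q ∈ SF m r x) :
    (fib m r x q).card ≤ piA (m r) (x / ∏ i, q i) := by
  unfold piA
  refine Finset.card_le_card_of_injOn (fun t => t (Fin.last r)) ?_ ?_
  · intro t ht
    obtain ⟨p, rfl, h1, h2, h3, h4⟩ := mem_fib.1 ht
    simp only [Fin.snoc_last, Finset.coe_filter, Finset.mem_range, Set.mem_ofPred_eq]
    refine ⟨Nat.lt_succ_of_le ?_, h2⟩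
    rw [Nat.le_div_iff_mul_le (prodpos hq), mul_comm]
    exact h4
  · intro t ht s hs hts
    obtain ⟨p, rfl, -⟩ := mem_fib.1 ht
    obtain ⟨p', rfl, -⟩ := mem_fib.1 hs
    simp only [Fin.snoc_last] at hts
    rw [hts]

theorem fib_big {N : ℕ} (m : ℕ → ZMod N) (r x y : ℕ) (q : Fin r → ℕ) (hq : q ∈ SF m r x)
    (hq' : q ∉ SF m r y) (hne : (fib m r x q).card ≠ 0) : y < x / ∏ i, q i := by
  obtain ⟨t, ht⟩ := Finset.card_pos.1 (Nat.pos_of_ne_zero hne)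
  obtain ⟨p, rfl, h1, h2, h3, h4⟩ := mem_fib.1 ht
  have : y < p := by
    by_contra hcon
    exact hq' (SF_mono m r (not_lt.1 hcon) h3)
  refine this.trans_le ?_
  rw [Nat.le_div_iff_mul_le (prodpos hq), mul_comm]
  exact h4

theorem fib_ge {N : ℕ} (m : ℕ → ZMod N) (r x y : ℕ) (q : Fin r → ℕ) (hq : q ∈ SF m r y) :
    piA (m r) (x / ∏ i, q i) ≤ (fib m r x q).card + y := by
  refine le_trans ?_ (Nat.add_le_add_left (piA_le (m r) y) _)
  refine le_trans ?_ (Nat.add_le_add_right (Finset.card_image_le (f := fun t => t (Fin.last r))) _)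
  unfold piA
  refine le_trans (Finset.card_le_card ?_) (Finset.card_union_le _ _)
  intro p hp
  rw [Finset.mem_filter, Finset.mem_range] at hp
  rw [Finset.mem_union]
  by_cases hpy : p ≤ y
  · right
    rw [Finset.mem_filter, Finset.mem_range]
    exact ⟨by omega, hp.2⟩
  · left
    rw [Finset.mem_image]
    have h1 : p ≤ x / ∏ i, q i := by omega
    refine ⟨Fin.snoc q p, mem_fib.2 ⟨p, rfl, h1.trans (Nat.div_le_self _ _), hp.2,
      SF_mono m r (not_le.1 hpy).le hq, ?_⟩, by simp⟩
    rw [Nat.le_div_iff_mul_le (prodpos hq), mul_comm] at h1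
    exact h1
end Tuples


section Count
open Topology

theorem pi_bounds {N : ℕ} [NeZero N] (a : ZMod N) (ha : IsUnit a) (δ : ℝ) (hδ : 0 < δ) :
    ∃ z0 : ℝ, 2 ≤ z0 ∧ ∀ z, z0 ≤ z → ((N.totient : ℝ)⁻¹ - δ) * (z / Real.log z) ≤ piA a ⌊z⌋₊ ∧
      (piA a ⌊z⌋₊ : ℝ) ≤ ((N.totient : ℝ)⁻¹ + δ) * (z / Real.log z) := by
  have h := pnt_ap a ha
  have h1 := h.eventually (lt_mem_nhds (show (N.totient : ℝ)⁻¹ - δ < _ by linarith))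
  have h2 := h.eventually (gt_mem_nhds (show (N.totient : ℝ)⁻¹ < (N.totient : ℝ)⁻¹ + δ by linarith))
  obtain ⟨z0, hz0⟩ := eventually_atTop.1 (h1.and h2)
  refine ⟨max z0 2, le_max_right _ _, fun z hz => ?_⟩
  obtain ⟨k1, k2⟩ := hz0 z ((le_max_left _ _).trans hz)
  have hz2 : 2 ≤ z := (le_max_right _ _).trans hz
  have hl : 0 < Real.log z := Real.log_pos (by linarith)
  have hp : (piA a ⌊z⌋₊ : ℝ) = (piA a ⌊z⌋₊ * Real.log z / z) * (z / Real.log z) := by field_simp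
  have hpos : 0 < z / Real.log z := by positivity
  rw [hp]
  exact ⟨mul_le_mul_of_nonneg_right k1.le hpos.le, mul_le_mul_of_nonneg_right k2.le hpos.le⟩

theorem C_lower {N : ℕ} (m : ℕ → ZMod N) (r x y : ℕ) (z0 c : ℝ) (hz0 : 2 ≤ z0) (hc : 0 ≤ c) (hyx : y ≤ x)
    (hU : ∀ z, z0 ≤ z → c * (z / Real.log z) ≤ piA (m r) ⌊z⌋₊)
    (h1 : ∀ q ∈ SF m r y, z0 ≤ (x : ℝ) / (∏ i, q i : ℕ)) :
    c * (x / Real.log x) * Ts m r (y + 1) - ((y : ℝ) + 1) ^ (r + 1) ≤ ((CF m (r + 1) x).card : ℝ) := by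
  have e1 : c * (x / Real.log x) * Ts m r (y + 1) - (SF m r y).card * y ≤ ∑ q ∈ SF m r y, ((fib m r x q).card : ℝ) := by
    rw [← SF_Ts, Finset.mul_sum, ← nsmul_eq_mul, ← Finset.sum_const, ← Finset.sum_sub_distrib]
    refine Finset.sum_le_sum fun q hq => ?_
    have hQ : 0 < ∏ i, q i := prodpos hq
    have hQ' : (1:ℝ) ≤ (∏ i, q i : ℕ) := by exact_mod_cast hQ
    have hz := h1 q hq
    have hz' := hU _ hz
    rw [Nat.floor_div_eq_div] at hz'
    have hg : (piA (m r) (x / ∏ i, q i) : ℝ) ≤ (fib m r x q).card + y := by exact_mod_cast fib_ge m r x y q hq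
    have hx0 : (0:ℝ) ≤ x := by positivity
    have hle : (x : ℝ) / (∏ i, q i : ℕ) ≤ x := div_le_self hx0 hQ'
    have hlog : Real.log ((x : ℝ) / (∏ i, q i : ℕ)) ≤ Real.log x := Real.log_le_log (by linarith) hle
    have hlp : 0 < Real.log ((x : ℝ) / (∏ i, q i : ℕ)) := Real.log_pos (by linarith)
    have e : c * (x / Real.log x) * ∏ i, 1 / (q i : ℝ) = c * ((x : ℝ) / (∏ i, q i : ℕ) / Real.log x) := by
      rw [Finset.prod_div_distrib]; push_cast; simp only [Finset.prod_const_one]; ring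
    rw [e]
    have : c * ((x : ℝ) / (∏ i, q i : ℕ) / Real.log x) ≤ c * ((x : ℝ) / (∏ i, q i : ℕ) / Real.log ((x : ℝ) / (∏ i, q i : ℕ))) := by
      gcongr
    linarith
  have e2 : ∑ q ∈ SF m r y, ((fib m r x q).card : ℝ) ≤ ((CF m (r + 1) x).card : ℝ) := by
    rw [CF_fib]; push_cast
    exact Finset.sum_le_sum_of_subset_of_nonneg (SF_mono m r hyx) fun _ _ _ => by positivity
  have e3 : ((SF m r y).card : ℝ) * y ≤ ((y : ℝ) + 1) ^ (r + 1) := by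
    rw [pow_succ]
    have : ((SF m r y).card : ℝ) ≤ ((y : ℝ) + 1) ^ r := by exact_mod_cast SF_card m r y
    gcongr
    linarith
  linarith

theorem C_upper {N : ℕ} (m : ℕ → ZMod N) (r x y : ℕ) (z0 c s ε : ℝ) (hc : 0 ≤ c) (hyx : y ≤ x)
    (hs : 0 < s) (hε : 0 < ε) (hx : 2 ≤ x)
    (hU : ∀ z, z0 ≤ z → piA (m r) ⌊z⌋₊ ≤ c * (z / Real.log z))
    (h1 : ∀ q ∈ SF m r y, z0 ≤ (x : ℝ) / (∏ i, q i : ℕ) ∧ s * Real.log x ≤ Real.log ((x : ℝ) / (∏ i, q i : ℕ)))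
    (h2 : z0 ≤ (y : ℝ) + 1 ∧ ε * Real.log x ≤ Real.log (y + 1)) :
    ((CF m (r + 1) x).card : ℝ) ≤ c * (x / Real.log x) * (Ts m r (y + 1) / s + (Ts m r (x + 1) - Ts m r (y + 1)) / ε) := by
  have hL : 0 < Real.log x := Real.log_pos (by exact_mod_cast hx)
  have e : ∀ q : Fin r → ℕ, ∀ t : ℝ, c * (x / Real.log x) * ((∏ i, 1 / (q i : ℝ)) / t) = c * ((x : ℝ) / (∏ i, q i : ℕ) / (t * Real.log x)) := by
    intro q t
    rw [Finset.prod_div_distrib]; push_cast; simp only [Finset.prod_const_one]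
    rw [div_div, div_mul_eq_div_div]
    ring
  have key : ∀ q ∈ SF m r x, ∀ t : ℝ, 0 < t → z0 ≤ (x : ℝ) / (∏ i, q i : ℕ) →
      t * Real.log x ≤ Real.log ((x : ℝ) / (∏ i, q i : ℕ)) →
      ((fib m r x q).card : ℝ) ≤ c * (x / Real.log x) * ((∏ i, 1 / (q i : ℝ)) / t) := by
    intro q hq t ht hz hl
    have hz' := hU _ hz
    rw [Nat.floor_div_eq_div] at hz'
    have hg : ((fib m r x q).card : ℝ) ≤ piA (m r) (x / ∏ i, q i) := by exact_mod_cast fib_le m r x q hq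
    rw [e]
    refine hg.trans (hz'.trans ?_)
    gcongr
  rw [CF_fib]
  push_cast
  rw [← SF_Ts, ← SF_Ts, ← Finset.sum_sdiff (SF_mono m r hyx), ← Finset.sum_sdiff (SF_mono m r hyx), add_sub_cancel_right,
    add_comm (Finset.sum _ _), mul_add]
  refine add_le_add ?_ ?_
  · rw [Finset.sum_div, Finset.mul_sum]
    refine Finset.sum_le_sum fun q hq => ?_
    exact key q (SF_mono m r hyx hq) s hs (h1 q hq).1 (h1 q hq).2
  · rw [Finset.sum_div, Finset.mul_sum]
    refine Finset.sum_le_sum fun q hq => ?_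
    rw [Finset.mem_sdiff] at hq
    by_cases hne : (fib m r x q).card = 0
    · rw [hne]
      have : 0 ≤ ∏ i, 1 / (q i : ℝ) := Finset.prod_nonneg fun i _ => by positivity
      push_cast
      positivity
    · have hb := fib_big m r x y q hq.1 hq.2 hne
      have hb' : (y : ℝ) + 1 ≤ (x : ℝ) / (∏ i, q i : ℕ) := by
        refine le_trans ?_ Nat.cast_div_le
        exact_mod_cast hb
      refine key q hq.1 ε hε (h2.1.trans hb') (h2.2.trans (Real.log_le_log (by positivity) hb'))

theorem LL_ratio (u : ℕ → ℕ) (c1 c2 : ℝ) (h1 : 0 < c1) (h2 : 0 < c2)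
    (h : ∀ᶠ x : ℕ in atTop, c1 * Real.log x ≤ Real.log (u x) ∧ Real.log (u x) ≤ c2 * Real.log x) :
    Tendsto (fun x => LL (u x) / LL x) atTop (𝓝 1) := by
  have hc : ∀ c : ℝ, Tendsto (fun x => 1 + Real.log c / LL x) atTop (𝓝 1) := by
    intro c
    have := (LL_tendsto.const_div_atTop (Real.log c)).const_add 1
    simpa using this
  have hlog : Tendsto (fun x : ℕ => Real.log x) atTop atTop := Real.tendsto_log_atTop.comp tendsto_natCast_atTop_atTop
  have hall := (h.and (LL_tendsto.eventually_gt_atTop 0)).and (hlog.eventually_gt_atTop 0)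
  refine tendsto_of_tendsto_of_tendsto_of_le_of_le' (hc c1) (hc c2) ?_ ?_
  · filter_upwards [hall] with x hx
    obtain ⟨⟨⟨k1, k2⟩, k3⟩, k4⟩ := hx
    rw [le_div_iff₀ k3, add_mul, div_mul_cancel₀ _ k3.ne', one_mul, add_comm]
    unfold LL
    rw [← Real.log_mul h1.ne' k4.ne']
    exact Real.log_le_log (by positivity) k1
  · filter_upwards [hall] with x hx
    obtain ⟨⟨⟨k1, k2⟩, k3⟩, k4⟩ := hx
    rw [div_le_iff₀ k3, add_mul, div_mul_cancel₀ _ k3.ne', one_mul, add_comm]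
    unfold LL
    rw [← Real.log_mul h2.ne' k4.ne']
    exact Real.log_le_log (lt_of_lt_of_le (by positivity) k1) k2

theorem Ts_ratio {N : ℕ} [NeZero N] (m : ℕ → ZMod N) (hm : ∀ i, IsUnit (m i)) (r : ℕ)
    (u : ℕ → ℕ) (hu : Tendsto u atTop atTop) (c1 c2 : ℝ) (h1 : 0 < c1) (h2 : 0 < c2)
    (h : ∀ᶠ x : ℕ in atTop, c1 * Real.log x ≤ Real.log (u x) ∧ Real.log (u x) ≤ c2 * Real.log x) :
    Tendsto (fun x => Ts m r (u x) / LL x ^ r) atTop (𝓝 ((N.totient : ℝ)⁻¹ ^ r / r.factorial)) := by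
  have k1 := (Ts_tendsto m hm r).comp hu
  have k2 := k1.mul ((LL_ratio u c1 c2 h1 h2 h).pow r)
  rw [one_pow, mul_one] at k2
  refine k2.congr' ?_
  filter_upwards [(LL_tendsto.comp hu).eventually_gt_atTop 0] with x hx
  have hx : 0 < LL (u x) := hx
  simp only [Function.comp]
  rw [div_pow, div_mul_div_cancel₀ (by positivity)]

noncomputable def yy (ε : ℝ) (x : ℕ) : ℕ := ⌊(x : ℝ) ^ ε⌋₊

theorem yy_tendsto (ε : ℝ) (hε : 0 < ε) : Tendsto (yy ε) atTop atTop :=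
  tendsto_nat_floor_atTop.comp ((tendsto_rpow_atTop hε).comp tendsto_natCast_atTop_atTop)

theorem Ts_x {N : ℕ} [NeZero N] (m : ℕ → ZMod N) (hm : ∀ i, IsUnit (m i)) (r : ℕ) :
    Tendsto (fun x => Ts m r (x + 1) / LL x ^ r) atTop (𝓝 ((N.totient : ℝ)⁻¹ ^ r / r.factorial)) := by
  refine Ts_ratio m hm r (fun x => x + 1) (tendsto_add_atTop_nat 1) 1 2 one_pos two_pos ?_
  filter_upwards [eventually_ge_atTop 2] with x hx
  have hx' : (2:ℝ) ≤ x := by exact_mod_cast hx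
  push_cast
  rw [one_mul]
  refine ⟨Real.log_le_log (by linarith) (by linarith), ?_⟩
  rw [show 2 * Real.log x = Real.log ((x:ℝ) ^ 2) by rw [Real.log_pow]; norm_num]
  exact Real.log_le_log (by linarith) (by nlinarith)

theorem yy_le (ε : ℝ) (x : ℕ) : (yy ε x : ℝ) ≤ (x:ℝ) ^ ε := Nat.floor_le (by positivity)
theorem lt_yy (ε : ℝ) (x : ℕ) : (x:ℝ) ^ ε < yy ε x + 1 := Nat.lt_floor_add_one _

theorem yy_le_self (ε : ℝ) (h1 : ε ≤ 1) (x : ℕ) (hx : 1 ≤ x) : yy ε x ≤ x := by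
  have h := (yy_le ε x).trans (Real.rpow_le_rpow_of_exponent_le (by exact_mod_cast hx) h1)
  rw [Real.rpow_one] at h
  exact_mod_cast h

theorem Ts_y {N : ℕ} [NeZero N] (m : ℕ → ZMod N) (hm : ∀ i, IsUnit (m i)) (r : ℕ) (ε : ℝ) (h0 : 0 < ε) (h1 : ε ≤ 1) :
    Tendsto (fun x => Ts m r (yy ε x + 1) / LL x ^ r) atTop (𝓝 ((N.totient : ℝ)⁻¹ ^ r / r.factorial)) := by
  refine Ts_ratio m hm r (fun x => yy ε x + 1) ((tendsto_add_atTop_nat 1).comp (yy_tendsto ε h0)) ε 2 h0 two_pos ?_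
  filter_upwards [eventually_ge_atTop 2] with x hx
  have hx' : (2:ℝ) ≤ x := by exact_mod_cast hx
  push_cast
  constructor
  · rw [← Real.log_rpow (by linarith)]
    exact Real.log_le_log (by positivity) (lt_yy ε x).le
  · have : (yy ε x : ℝ) ≤ x := by exact_mod_cast yy_le_self ε h1 x (by omega)
    rw [show 2 * Real.log x = Real.log ((x:ℝ) ^ 2) by rw [Real.log_pow]; norm_num]
    exact Real.log_le_log (by positivity) (by nlinarith)

theorem SF_prod_le {N : ℕ} (m : ℕ → ZMod N) (r x : ℕ) (ε : ℝ) (hx : 1 ≤ x) (q : Fin r → ℕ)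
    (hq : q ∈ SF m r (yy ε x)) : (x : ℝ) ^ (1 - r * ε) ≤ (x : ℝ) / (∏ i, q i : ℕ) := by
  have hx' : (0:ℝ) < x := by exact_mod_cast hx
  have hQ : (0:ℝ) < (∏ i, q i : ℕ) := by exact_mod_cast prodpos hq
  have h1 : ((∏ i, q i : ℕ) : ℝ) ≤ (x : ℝ) ^ (r * ε) := by
    push_cast
    calc ∏ i, (q i : ℝ) ≤ ∏ i : Fin r, (x : ℝ) ^ ε := Finset.prod_le_prod (fun i _ => by positivity) fun i _ => by
          refine le_trans ?_ (yy_le ε x)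
          exact_mod_cast (mem_SF.1 hq).1 i
      _ = (x : ℝ) ^ (r * ε) := by
          rw [Finset.prod_const, Finset.card_univ, Fintype.card_fin, mul_comm, Real.rpow_mul hx'.le, Real.rpow_natCast]
  rw [Real.rpow_sub hx', Real.rpow_one]
  gcongr

theorem err_tendsto (r : ℕ) (ε : ℝ) (h0 : 0 < ε) (h1 : (r + 1) * ε < 1) :
    Tendsto (fun x : ℕ => ((yy ε x : ℝ) + 1) ^ (r + 1) * Real.log x / (x * LL x ^ r)) atTop (𝓝 0) := by
  have hlim : Tendsto (fun x : ℕ => 2 ^ (r + 1) * (Real.log x / (x:ℝ) ^ (1 - (r + 1) * ε))) atTop (𝓝 0) := by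
    have := (isLittleO_log_rpow_atTop (show 0 < 1 - (r + 1) * ε by linarith)).tendsto_div_nhds_zero.comp tendsto_natCast_atTop_atTop (α := ℕ)
    simpa using this.const_mul ((2:ℝ) ^ (r + 1))
  have hev := (LL_tendsto.eventually_ge_atTop 1).and (eventually_ge_atTop 2)
  refine tendsto_of_tendsto_of_tendsto_of_le_of_le' tendsto_const_nhds hlim ?_ ?_
  · filter_upwards [hev] with x hx
    have hL : 0 < LL x := by linarith [hx.1]
    have hl : 0 ≤ Real.log x := Real.log_natCast_nonneg x
    positivity
  · filter_upwards [hev] with x hx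
    have hL : 1 ≤ LL x := hx.1
    have hx2 : (2:ℝ) ≤ x := by exact_mod_cast hx.2
    have hx0 : (0:ℝ) < x := by linarith
    have hl : 0 ≤ Real.log x := Real.log_natCast_nonneg x
    have hp : 1 ≤ (x:ℝ) ^ ε := Real.one_le_rpow (by linarith) h0.le
    have hy : (yy ε x : ℝ) + 1 ≤ 2 * (x:ℝ) ^ ε := by linarith [yy_le ε x]
    calc ((yy ε x : ℝ) + 1) ^ (r + 1) * Real.log x / (x * LL x ^ r)
        ≤ (2 * (x:ℝ) ^ ε) ^ (r + 1) * Real.log x / (x * 1) := by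
          gcongr
          exact one_le_pow₀ hL
      _ = _ := by
          rw [Real.rpow_sub hx0, Real.rpow_one, mul_pow, mul_comm ((r:ℝ) + 1) ε, Real.rpow_mul hx0.le]
          rw [← Nat.cast_add_one, Real.rpow_natCast]
          field_simp

theorem C_tendsto {N : ℕ} [NeZero N] (m : ℕ → ZMod N) (hm : ∀ i, IsUnit (m i)) (r : ℕ) :
    Tendsto (fun x : ℕ => ((CF m (r + 1) x).card : ℝ) * Real.log x / (x * LL x ^ r)) atTop
      (𝓝 ((N.totient : ℝ)⁻¹ * ((N.totient : ℝ)⁻¹ ^ r / r.factorial))) := by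
  have hA0 : 0 < (N.totient : ℝ)⁻¹ := inv_pos.2 (by exact_mod_cast Nat.totient_pos.2 (NeZero.pos N))
  set A := (N.totient : ℝ)⁻¹ with hA
  set B := A ^ r / r.factorial with hB
  have hB0 : 0 < B := by positivity
  have hx0 : ∀ᶠ x : ℕ in atTop, 2 ≤ x ∧ 0 < LL x :=
    (eventually_ge_atTop 2).and (LL_tendsto.eventually_gt_atTop 0)
  -- main bounds
  have main : ∀ δ : ℝ, 0 < δ → δ < A → (r + 1) * δ < 1 → δ ≤ 1 →
      ∃ f g : ℕ → ℝ, Tendsto f atTop (𝓝 ((A - δ) * B)) ∧ Tendsto g atTop (𝓝 ((A + δ) * (B / (1 - r * δ)))) ∧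
      ∀ᶠ x : ℕ in atTop, f x ≤ ((CF m (r + 1) x).card : ℝ) * Real.log x / (x * LL x ^ r) ∧
        ((CF m (r + 1) x).card : ℝ) * Real.log x / (x * LL x ^ r) ≤ g x := by
    intro δ h0 h1 h2 h3
    obtain ⟨z0, hz2, hz⟩ := pi_bounds (m r) (hm r) δ h0
    have hs : 0 < 1 - r * δ := by nlinarith
    have hTy : Tendsto (fun x => Ts m r (yy δ x + 1) / LL x ^ r) atTop (𝓝 B) := Ts_y m hm r δ h0 h3
    have hTx : Tendsto (fun x => Ts m r (x + 1) / LL x ^ r) atTop (𝓝 B) := Ts_x m hm r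
    refine ⟨fun x => (A - δ) * (Ts m r (yy δ x + 1) / LL x ^ r) - ((yy δ x : ℝ) + 1) ^ (r + 1) * Real.log x / (x * LL x ^ r),
      fun x => (A + δ) * (Ts m r (yy δ x + 1) / LL x ^ r / (1 - r * δ) +
        (Ts m r (x + 1) / LL x ^ r - Ts m r (yy δ x + 1) / LL x ^ r) / δ), ?_, ?_, ?_⟩
    · have := (hTy.const_mul (A - δ)).sub (err_tendsto r δ h0 h2)
      rwa [sub_zero] at this
    · have := ((hTy.div_const (1 - r * δ)).add
        ((hTx.sub hTy).div_const δ)).const_mul (A + δ)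
      rwa [sub_self, zero_div, add_zero] at this
    · have ht1 : ∀ᶠ x : ℕ in atTop, z0 ≤ (x : ℝ) ^ (1 - r * δ) :=
        ((tendsto_rpow_atTop hs).comp tendsto_natCast_atTop_atTop).eventually_ge_atTop z0
      have ht2 : ∀ᶠ x : ℕ in atTop, z0 ≤ (x : ℝ) ^ δ :=
        ((tendsto_rpow_atTop h0).comp tendsto_natCast_atTop_atTop).eventually_ge_atTop z0
      filter_upwards [hx0, ht1, ht2] with x hx hx1 hx2
      obtain ⟨hx, hLL⟩ := hx
      have hxr : (2:ℝ) ≤ x := by exact_mod_cast hx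
      have hxp : (0:ℝ) < x := by linarith
      have hL : 0 < Real.log x := Real.log_pos (by linarith)
      have hyx := yy_le_self δ h3 x (by omega)
      have q1 : ∀ q ∈ SF m r (yy δ x), z0 ≤ (x : ℝ) / (∏ i, q i : ℕ) := fun q hq =>
        hx1.trans (SF_prod_le m r x δ (by omega) q hq)
      have q2 : ∀ q ∈ SF m r (yy δ x), (1 - r * δ) * Real.log x ≤ Real.log ((x : ℝ) / (∏ i, q i : ℕ)) := fun q hq => by
        rw [← Real.log_rpow hxp]
        exact Real.log_le_log (by positivity) (SF_prod_le m r x δ (by omega) q hq)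
      have lo := C_lower m r x (yy δ x) z0 (A - δ) hz2 (by linarith) hyx (fun z h => (hz z h).1) q1
      have up := C_upper m r x (yy δ x) z0 (A + δ) (1 - r * δ) δ (by linarith) hyx hs h0 hx (fun z h => (hz z h).2)
        (fun q hq => ⟨q1 q hq, q2 q hq⟩) ⟨hx2.trans (lt_yy δ x).le, by
          rw [← Real.log_rpow hxp]
          exact Real.log_le_log (by positivity) (lt_yy δ x).le⟩
      have hw : 0 < Real.log x / (x * LL x ^ r) := by positivity
      have lo' := mul_le_mul_of_nonneg_right lo hw.le
      have up' := mul_le_mul_of_nonneg_right up hw.le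
      constructor
      · refine le_trans (le_of_eq ?_) (lo'.trans (le_of_eq ?_))
        · field_simp
        · ring
      · refine le_trans (le_of_eq ?_) (up'.trans (le_of_eq ?_))
        · ring
        · field_simp
  have hsmall : ∀ᶠ δ : ℝ in 𝓝[>] 0, 0 < δ ∧ δ < A ∧ (r + 1) * δ < 1 ∧ δ ≤ 1 := by
    have c1 : ∀ᶠ δ : ℝ in 𝓝[>] 0, δ < A := nhdsWithin_le_nhds (gt_mem_nhds hA0)
    have c2 : ∀ᶠ δ : ℝ in 𝓝[>] 0, δ < 1 / (r + 1) := nhdsWithin_le_nhds (gt_mem_nhds (by positivity))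
    have c3 : ∀ᶠ δ : ℝ in 𝓝[>] 0, δ < 1 := nhdsWithin_le_nhds (gt_mem_nhds (by positivity))
    filter_upwards [c1, c2, c3, self_mem_nhdsWithin] with δ d1 d2 d3 d4
    refine ⟨d4, d1, ?_, d3.le⟩
    rw [lt_div_iff₀ (by positivity)] at d2
    linarith
  rw [tendsto_order]
  constructor
  · intro c hc
    have hl : Tendsto (fun δ : ℝ => (A - δ) * B) (𝓝[>] 0) (𝓝 (A * B)) := by
      have : Continuous (fun δ : ℝ => (A - δ) * B) := by fun_prop
      simpa using (this.tendsto 0).mono_left nhdsWithin_le_nhds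
    obtain ⟨δ, ⟨d1, d2, d3, d4⟩, d5⟩ := (hsmall.and (hl.eventually (lt_mem_nhds hc))).exists
    obtain ⟨f, g, hf, hg, hfg⟩ := main δ d1 d2 d3 d4
    filter_upwards [hfg, hf.eventually (lt_mem_nhds d5)] with x e1 e2
    exact e2.trans_le e1.1
  · intro c hc
    have hl : Tendsto (fun δ : ℝ => (A + δ) * (B / (1 - r * δ))) (𝓝[>] 0) (𝓝 (A * B)) := by
      have : ContinuousAt (fun δ : ℝ => (A + δ) * (B / (1 - r * δ))) 0 := by
        refine ContinuousAt.mul (by fun_prop) (ContinuousAt.div (by fun_prop) (by fun_prop) (by simp))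
      simpa using this.tendsto.mono_left nhdsWithin_le_nhds
    obtain ⟨δ, ⟨d1, d2, d3, d4⟩, d5⟩ := (hsmall.and (hl.eventually (gt_mem_nhds hc))).exists
    obtain ⟨f, g, hf, hg, hfg⟩ := main δ d1 d2 d3 d4
    filter_upwards [hfg, hg.eventually (gt_mem_nhds d5)] with x e1 e2
    exact e1.2.trans_lt e2
end Count

theorem stmt_7 (N : ℕ) (hN : 1 ≤ N) (k : ℕ) (hk : 2 ≤ k)
    (m : Fin k → (ZMod N)ˣ) :
    IsEquivalent atTop
      (fun x : ℕ => (((Finset.range (x + 1)).filter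
          (fun n => ∃ p : Fin k → ℕ, Monotone p ∧ (∀ i, (p i).Prime) ∧
            n = ∏ i, p i ∧ ∀ i, (p i : ZMod N) = (m i : ZMod N))).card : ℝ))
      (fun x : ℕ => (1 / (N.totient : ℝ) ^ k) *
          (x * (Real.log (Real.log x)) ^ (k - 1) /
            ((k - 1).factorial * Real.log x))) := by
  have : NeZero N := ⟨by omega⟩
  obtain ⟨r, rfl⟩ : ∃ r, k = r + 1 := ⟨k - 1, by omega⟩
  set M : ℕ → ZMod N := fun i => if h : i < r + 1 then (m ⟨i, h⟩ : ZMod N) else 1 with hM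
  have hMu : ∀ i, IsUnit (M i) := by
    intro i
    simp only [hM]
    split_ifs
    · exact Units.isUnit _
    · exact isUnit_one
  have hMm : ∀ i : Fin (r + 1), (m i : ZMod N) = M i := by
    intro i
    simp only [hM, i.is_lt, dif_pos]
  simp only [hMm]
  have hcard : ∀ x : ℕ, ((Finset.range (x + 1)).filter
          (fun n => ∃ p : Fin (r + 1) → ℕ, Monotone p ∧ (∀ i, (p i).Prime) ∧
            n = ∏ i, p i ∧ ∀ i, (p i : ZMod N) = M i)).card = (CF M (r + 1) x).card := fun x => CF_card M (r + 1) x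
  have hA0 : 0 < (N.totient : ℝ) := by exact_mod_cast Nat.totient_pos.2 (NeZero.pos N)
  have hC := C_tendsto M hMu r
  simp only [hcard, Nat.add_sub_cancel]
  have hev : ∀ᶠ x : ℕ in atTop, 2 ≤ x ∧ 0 < LL x :=
    (eventually_ge_atTop 2).and (LL_tendsto.eventually_gt_atTop 0)
  rw [isEquivalent_iff_tendsto_one]
  · have h1 := hC.const_mul ((N.totient : ℝ) ^ (r + 1) * r.factorial)
    rw [show (N.totient : ℝ) ^ (r + 1) * r.factorial * ((N.totient : ℝ)⁻¹ * ((N.totient : ℝ)⁻¹ ^ r / r.factorial)) = 1 by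
      rw [pow_succ, inv_pow]; field_simp] at h1
    refine h1.congr' ?_
    filter_upwards [hev] with x hx
    obtain ⟨hx, hLL⟩ := hx
    have hxr : (2:ℝ) ≤ x := by exact_mod_cast hx
    have hL : 0 < Real.log x := Real.log_pos (by linarith)
    simp only [Pi.div_apply]
    change _ = _ / (1 / (N.totient : ℝ) ^ (r + 1) * (x * LL x ^ r / (r.factorial * Real.log x)))
    have hF : (0:ℝ) < r.factorial := by positivity
    have hxp : (0:ℝ) < x := by linarith
    generalize ((CF M (r + 1) x).card : ℝ) = t
    generalize LL x = l at *
    generalize Real.log x = l2 at *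
    generalize (r.factorial : ℝ) = l3 at *
    generalize (x : ℝ) = l4 at *
    generalize (N.totient : ℝ) = l5 at *
    clear * - hF hxp hLL hL hA0
    field_simp
  · filter_upwards [hev] with x hx
    obtain ⟨hx, hLL⟩ := hx
    have hxr : (2:ℝ) ≤ x := by exact_mod_cast hx
    have hL : 0 < Real.log x := Real.log_pos (by linarith)
    change 1 / (N.totient : ℝ) ^ (r + 1) * (x * LL x ^ r / (r.factorial * Real.log x)) ≠ 0
    positivity
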